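/- arXiv:math/0201304 — 4 statements merged into one kernel-verified Lean document; each statement's English description precedes it below -/
import Mathlib

section
/- The following two conditions are equivalent: (i) each σ_k(b_1,…,b_n), k = 1,…,n, is invariant under circular permutations of the b_i, i.e. for every j one has σ_k(b_{1+j},…,b_{n+j}) = σ_k(b_1,…,b_n) for all k, where subscripts are read mod n; (ii) each σ_k(b_1,…,b_n) commutes with each b_i, i.e. σ_k(b_1,…,b_n)·b_i = b_i·σ_k(b_1,…,b_n) for all 1 ≤ i, k ≤ n. -/
open Finset

/-- The `k`-th elementary polynomial evaluated at elements `b_1, …, b_n` of a ring `B`: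
the sum, over all `k`-element subsets of the index set, of the product of the
corresponding elements taken in increasing order of the indices. -/
def elemPolyEval {B : Type*} [Ring B] {n : ℕ} (b : Fin n → B) (k : ℕ) : B :=
  ∑ s ∈ Finset.univ.powersetCard k, ((s.sort (· ≤ ·)).map b).prod

/-!
Adjoin a central variable `X` to `B`. The elements `σ_k(b_1, …, b_n)` are the coefficients of the
ordered product `P = (1 + b_1 X) ⋯ (1 + b_n X)`, and each factor is left cancellable because its
constant term is `1`. Cutting `P = T D` after `j` factors, the `j`-fold rotation of `P` is `D T`.
If `P` commutes with all the factors, then `T (D T) = P T = T P`, and cancelling `T` gives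
`D T = P`. Conversely, suppose that no rotation changes `P`. Rotating a factor `u` to the front and
then to the back gives `P = u R = R u`, so `u P = u R u = P u`.
-/

open Polynomial

section CircularProducts

variable {M : Type*} [Monoid M] {l : List M}

theorem commute_prod_of_forall_prod_rotate_eq (h : ∀ j, (l.rotate j).prod = l.prod) {u : M}
    (hu : u ∈ l) : Commute l.prod u := by
  obtain ⟨s, t, rfl⟩ := List.append_of_mem hu
  have front : u * (t ++ s).prod = (s ++ u :: t).prod := by
    rw [← h s.length, List.rotate_append_length_eq, List.cons_append, List.prod_cons]
  have back : (t ++ s).prod * u = (s ++ u :: t).prod := by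
    rw [← h (s.length + 1), ← List.rotate_rotate, List.rotate_append_length_eq, List.cons_append,
      List.rotate_cons_succ, List.rotate_zero, List.prod_append (l₂ := [u]), List.prod_singleton]
  calc (s ++ u :: t).prod * u
      = u * (t ++ s).prod * u := by rw [front]
    _ = u * (s ++ u :: t).prod := by rw [mul_assoc, back]

theorem prod_rotate_eq_of_forall_commute (hl : ∀ u ∈ l, IsLeftRegular u)
    (h : ∀ u ∈ l, Commute l.prod u) (j : ℕ) : (l.rotate j).prod = l.prod := by
  rw [List.rotate_eq_drop_append_take_mod, List.prod_append]
  set T := l.take (j % l.length)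
  set D := l.drop (j % l.length)
  have mem_of_mem_T : ∀ u ∈ T, u ∈ l := fun _ => List.mem_of_mem_take
  have prod_T_mul_prod_D : T.prod * D.prod = l.prod := List.prod_take_mul_prod_drop l _
  have regular : IsLeftRegular T.prod :=
    T.prod_induction IsLeftRegular (fun _ _ => .mul) isRegular_one.left
      fun u hu => hl u (mem_of_mem_T u hu)
  have comm : Commute l.prod T.prod :=
    Commute.list_prod_right _ _ fun u hu => h u (mem_of_mem_T u hu)
  refine regular ?_
  calc T.prod * (D.prod * T.prod)
      = l.prod * T.prod := by rw [← mul_assoc, prod_T_mul_prod_D]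
    _ = T.prod * l.prod := comm

theorem forall_prod_rotate_eq_iff_forall_commute (hl : ∀ u ∈ l, IsLeftRegular u) :
    (∀ j, (l.rotate j).prod = l.prod) ↔ ∀ u ∈ l, Commute l.prod u :=
  ⟨fun h _ => commute_prod_of_forall_prod_rotate_eq h, prod_rotate_eq_of_forall_commute hl⟩

end CircularProducts

section FinRotate

variable {α : Type*} {n : ℕ}

theorem ofFn_comp_finRotate (f : Fin n → α) :
    List.ofFn (f ∘ finRotate n) = (List.ofFn f).rotate 1 := by
  cases n with
  | zero => simp
  | succ n =>
    rw [List.ofFn_succ', List.concat_eq_append, List.ofFn_succ, List.rotate_cons_succ,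
      List.rotate_zero]
    simp [finRotate_apply]

theorem ofFn_comp_finRotate_iterate (f : Fin n → α) (j : ℕ) :
    List.ofFn (f ∘ (finRotate n)^[j]) = (List.ofFn f).rotate j := by
  induction j with
  | zero => simp
  | succ j ih =>
    rw [Function.iterate_succ, ← Function.comp_assoc, ofFn_comp_finRotate, ih, List.rotate_rotate]

end FinRotate

theorem map_sort_val_powersetCard {α : Type*} [LinearOrder α] (s : Finset α) (k : ℕ) :
    (s.powersetCard k).val.map (fun t => t.sort (· ≤ ·)) = (s.sort (· ≤ ·)).sublistsLen k := by
  have sort_sublist : ∀ l ∈ (s.sort (· ≤ ·)).sublistsLen k, (l : Multiset α).sort (· ≤ ·) = l :=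
    fun l hl => List.mergeSort_eq_self _
      ((s.pairwise_sort (· ≤ ·)).sublist (List.mem_sublistsLen.1 hl).1)
  calc (s.powersetCard k).val.map (fun t => t.sort (· ≤ ·))
      = (Multiset.powersetCard k s.val).map (fun m => m.sort (· ≤ ·)) := by
        rw [← s.map_val_val_powersetCard, Multiset.map_map]
        rfl
    _ = ((s.sort (· ≤ ·)).sublistsLen k).map fun l : List α => (l : Multiset α).sort (· ≤ ·) := by
        rw [← s.sort_eq (· ≤ ·), Multiset.powersetCard_coe, Multiset.map_coe, List.map_map]
        rfl
    _ = (s.sort (· ≤ ·)).sublistsLen k := by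
        rw [List.map_congr_left sort_sublist, List.map_id']

section LinearFactors

variable {R : Type*}

theorem coeff_prod_map_one_add_C_mul_X [Semiring R] {ι : Type*} (f : ι → R) (l : List ι) (k : ℕ) :
    (l.map fun i => 1 + C (f i) * X).prod.coeff k =
      ((l.sublistsLen k).map fun s => (s.map f).prod).sum := by
  induction l generalizing k with
  | nil => cases k <;> simp [coeff_one]
  | cons i l ih =>
    rw [List.map_cons, List.prod_cons, add_mul, one_mul, mul_assoc, X_mul]
    cases k with
    | zero => simp [ih]
    | succ k =>
      simp [ih, List.sublistsLen_succ_cons, Function.comp_def, List.sum_map_mul_left]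

variable [Ring R]

theorem isLeftRegular_one_add_C_mul_X (a : R) : IsLeftRegular (1 + C a * X) := by
  intro p q hpq
  ext k
  induction k with
  | zero => simpa [add_mul, mul_assoc, X_mul] using Polynomial.ext_iff.1 hpq 0
  | succ k ih => simpa [add_mul, mul_assoc, X_mul, ih] using Polynomial.ext_iff.1 hpq (k + 1)

theorem commute_one_add_C_mul_X_iff {p : R[X]} {a : R} :
    Commute p (1 + C a * X) ↔ ∀ k, Commute (p.coeff k) a := by
  have cancel_one : Commute p (1 + C a * X) ↔ p * C a * X = C a * p * X := by
    rw [commute_iff_eq, mul_add, add_mul, mul_one, one_mul, add_right_inj, ← mul_assoc,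
      mul_assoc (C a) X, X_mul, ← mul_assoc]
  rw [cancel_one, isRegular_X.right.eq_iff, Polynomial.ext_iff]
  simp only [coeff_mul_C, coeff_C_mul, commute_iff_eq]

end LinearFactors

section ElemPolyEval

variable {B : Type*} [Ring B] {n : ℕ}

theorem elemPolyEval_eq_sum_sublistsLen (b : Fin n → B) (k : ℕ) :
    elemPolyEval b k = (((List.finRange n).sublistsLen k).map fun s => (s.map b).prod).sum := by
  rw [← Fin.sort_univ, ← Multiset.sum_coe, ← Multiset.map_coe, ← map_sort_val_powersetCard,
    Multiset.map_map]
  rfl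

/-- The generating polynomial `(1 + b_1 X) ⋯ (1 + b_n X)` of the elementary polynomials evaluated
at `b_1, …, b_n`. The variable `X` commutes with all coefficients, and the factors are multiplied
in increasing order of the indices. -/
noncomputable def elemGenPoly (b : Fin n → B) : B[X] :=
  (List.ofFn fun i => 1 + C (b i) * X).prod

theorem coeff_elemGenPoly (b : Fin n → B) (k : ℕ) :
    (elemGenPoly b).coeff k = elemPolyEval b k := by
  rw [elemGenPoly, List.ofFn_eq_map, coeff_prod_map_one_add_C_mul_X,
    elemPolyEval_eq_sum_sublistsLen]

theorem elemGenPoly_eq_iff {b c : Fin n → B} :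
    elemGenPoly b = elemGenPoly c ↔ ∀ k, elemPolyEval b k = elemPolyEval c k := by
  simp only [Polynomial.ext_iff, coeff_elemGenPoly]

theorem elemGenPoly_comp_finRotate_iterate (b : Fin n → B) (j : ℕ) :
    elemGenPoly (b ∘ (finRotate n)^[j]) =
      ((List.ofFn fun i => 1 + C (b i) * X).rotate j).prod := by
  rw [← ofFn_comp_finRotate_iterate]
  rfl

theorem elemPolyEval_circular_invariant_iff_commutes_general (b : Fin n → B) :
    (∀ j k, elemPolyEval (fun i => b ((finRotate n)^[j] i)) k = elemPolyEval b k) ↔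
      ∀ i k, Commute (elemPolyEval b k) (b i) := by
  have regular : ∀ u ∈ List.ofFn fun i => 1 + C (b i) * X, IsLeftRegular u :=
    List.forall_mem_ofFn_iff.2 fun i => isLeftRegular_one_add_C_mul_X (b i)
  calc (∀ j k, elemPolyEval (b ∘ (finRotate n)^[j]) k = elemPolyEval b k)
      ↔ ∀ j, ((List.ofFn fun i => 1 + C (b i) * X).rotate j).prod = elemGenPoly b := by
        simp only [← elemGenPoly_eq_iff, elemGenPoly_comp_finRotate_iterate]
    _ ↔ ∀ i, Commute (elemGenPoly b) (1 + C (b i) * X) :=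
        (forall_prod_rotate_eq_iff_forall_commute regular).trans List.forall_mem_ofFn_iff
    _ ↔ ∀ i k, Commute (elemPolyEval b k) (b i) := by
        simp only [commute_one_add_C_mul_X_iff, coeff_elemGenPoly]

theorem elemPolyEval_zero (b : Fin n → B) : elemPolyEval b 0 = 1 := by
  simp [elemPolyEval]

theorem elemPolyEval_eq_zero_of_lt (b : Fin n → B) {k : ℕ} (hk : n < k) :
    elemPolyEval b k = 0 := by
  rw [elemPolyEval, powersetCard_eq_empty.2 (by simpa using hk), sum_empty]

theorem forall_elemPolyEval_eq_iff {b c : Fin n → B} :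
    (∀ k, 1 ≤ k → k ≤ n → elemPolyEval b k = elemPolyEval c k) ↔
      ∀ k, elemPolyEval b k = elemPolyEval c k := by
  refine ⟨fun h k => ?_, fun h k _ _ => h k⟩
  rcases k.eq_zero_or_pos with rfl | hk
  · rw [elemPolyEval_zero, elemPolyEval_zero]
  rcases le_or_gt k n with hkn | hkn
  · exact h k hk hkn
  · rw [elemPolyEval_eq_zero_of_lt b hkn, elemPolyEval_eq_zero_of_lt c hkn]

theorem forall_commute_elemPolyEval_iff {b : Fin n → B} {a : B} :
    (∀ k, 1 ≤ k → k ≤ n → Commute (elemPolyEval b k) a) ↔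
      ∀ k, Commute (elemPolyEval b k) a := by
  refine ⟨fun h k => ?_, fun h k _ _ => h k⟩
  rcases k.eq_zero_or_pos with rfl | hk
  · exact elemPolyEval_zero b ▸ Commute.one_left a
  rcases le_or_gt k n with hkn | hkn
  · exact h k hk hkn
  · exact elemPolyEval_eq_zero_of_lt b hkn ▸ Commute.zero_left a

end ElemPolyEval

/-- For elements `b_1, …, b_n` of a ring `B` (with `n ≥ 3`), the following are
equivalent: (i) each `σ_k(b_1,…,b_n)`, `1 ≤ k ≤ n`, is invariant under circular
permutations of the `b_i` (shifting the subscripts mod `n`); (ii) each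
`σ_k(b_1,…,b_n)` commutes with each `b_i`. -/
theorem elemPolyEval_circular_invariant_iff_commutes
    {B : Type*} [Ring B] (n : ℕ) (hn : 3 ≤ n) (b : Fin n → B) :
    (∀ (j k : ℕ), 1 ≤ k → k ≤ n →
        elemPolyEval (fun i => b ((⇑(finRotate n))^[j] i)) k = elemPolyEval b k) ↔
    (∀ (i : Fin n) (k : ℕ), 1 ≤ k → k ≤ n →
        elemPolyEval b k * b i = b i * elemPolyEval b k) := by
  simp only [forall_elemPolyEval_eq_iff, ← commute_iff_eq, forall_commute_elemPolyEval_iff]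
  exact elemPolyEval_circular_invariant_iff_commutes_general b
end

section
/- Every G-invariant element p of R′ can be written in the form p = z_0 + z_1c + z_2c², where z_0, z_1, z_2 lie in the K-subalgebra Z_0 of R′ generated by σ_1, σ_2, σ_3, c³, and d (a central subalgebra of R′). -/
open Finset

/-- The free algebra `P = K⟨x_1, x_2, x_3⟩` (generators indexed by `Fin 3`). -/
noncomputable abbrev P3 (K : Type*) [Field K] := FreeAlgebra K (Fin 3)

/-- The generators `x_1, x_2, x_3` of `P` (zero-based: `x3 K 0 = x_1`, etc.). -/
noncomputable def x3 (K : Type*) [Field K] (i : Fin 3) : P3 K := FreeAlgebra.ι K i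

/-- The elementary polynomials `σ_1 = x_1+x_2+x_3`, `σ_2 = x_1x_2+x_1x_3+x_2x_3`,
`σ_3 = x_1x_2x_3` (zero-based indexing: `sig3 K 0 = σ_1`, etc.). -/
noncomputable def sig3 (K : Type*) [Field K] : Fin 3 → P3 K :=
  ![x3 K 0 + x3 K 1 + x3 K 2,
    x3 K 0 * x3 K 1 + x3 K 0 * x3 K 2 + x3 K 1 * x3 K 2,
    x3 K 0 * x3 K 1 * x3 K 2]

/-- The relation identifying `x_i * σ_k` with `σ_k * x_i`; the quotient
`R′ = P/I` by the two-sided ideal `I` generated by the commutators `[x_i, σ_k]`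
is `RingQuot` of this relation. -/
noncomputable def rel3 (K : Type*) [Field K] : P3 K → P3 K → Prop :=
  fun a b => ∃ i k : Fin 3, a = x3 K i * sig3 K k ∧ b = sig3 K k * x3 K i

/-- The quotient ring `R′ = P/I`. -/
noncomputable abbrev R3 (K : Type*) [Field K] := RingQuot (rel3 K)

/-- The quotient map `P → R′`. -/
noncomputable def mk3 (K : Type*) [Field K] : P3 K →ₐ[K] R3 K :=
  RingQuot.mkAlgHom K (rel3 K)

/-- The image in `R′` of the generator `x_i`. -/
noncomputable def X3 (K : Type*) [Field K] (i : Fin 3) : R3 K := mk3 K (x3 K i)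

/-- The image in `R′` of `σ_k`. -/
noncomputable def S3 (K : Type*) [Field K] (k : Fin 3) : R3 K := mk3 K (sig3 K k)

/-- The element `c = [x_1, x_2]` of `R′` (in `R′` one has
`[x_1,x_2] = [x_2,x_3] = [x_3,x_1]`, and `c` denotes this common value). -/
noncomputable def c3 (K : Type*) [Field K] : R3 K :=
  X3 K 0 * X3 K 1 - X3 K 1 * X3 K 0

/-- The orbit polynomial `d = x_1x_2x_1 + x_2x_3x_2 + x_3x_1x_3` in `R′`. -/
noncomputable def d3 (K : Type*) [Field K] : R3 K :=
  X3 K 0 * X3 K 1 * X3 K 0 + X3 K 1 * X3 K 2 * X3 K 1 + X3 K 2 * X3 K 0 * X3 K 2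

/-- The orbit polynomial `e = x_1x_3x_1 + x_2x_1x_2 + x_3x_2x_3` in `R′`. -/
noncomputable def e3 (K : Type*) [Field K] : R3 K :=
  X3 K 0 * X3 K 2 * X3 K 0 + X3 K 1 * X3 K 0 * X3 K 1 + X3 K 2 * X3 K 1 * X3 K 2

/-- The generator of the group `G` of circular permutations, acting as the
`K`-algebra automorphism of `P` sending `x_i` to `x_{i+1}` (mod `3`). -/
noncomputable def rot3 (K : Type*) [Field K] : P3 K →ₐ[K] P3 K :=
  FreeAlgebra.lift K fun i => FreeAlgebra.ι K (finRotate 3 i)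

/-!
The quadratic relation `xᵢ₊₁ xᵢ₊₂ = σ₂ - σ₁ xᵢ + xᵢ²` rewrites every product of two distinct
generators, up to `c`, in terms of squares. It also shows that `x₁x₂x₃` is invariant under cyclic
shifts, which gives the cubic equation of `xᵢ` over the `σₖ` and the twisted commutation
`c xᵢ = xᵢ₊₂ c`. Since the three terms of `d` differ by combinations of `1`, `xᵢ`, `xᵢ²`, dividing
by `3` makes `R′` a left module over `Z₀[c]` spanned by the powers `xᵢᵏ` with `k ≤ 2`. The trace
over the cyclic group is `Z₀[c]`-linear and sends these powers to power sums, which lie in `Z₀[c]`,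
so an invariant, being a third of its trace, lies in `Z₀[c] = Z₀ + Z₀c + Z₀c²`.
-/

section Adjoin

variable {K R : Type*} [CommSemiring K] [Semiring R] [Algebra K R]

lemma adjoin_subset_span_of_mul_mem {A : Subalgebra K R} {g s : Set R}
    (h1 : 1 ∈ Submodule.span A g) (hmul : ∀ u ∈ g, ∀ a ∈ s, u * a ∈ Submodule.span A g) :
    (Algebra.adjoin K s : Set R) ⊆ Submodule.span A g := by
  suffices h : ∀ a ∈ Algebra.adjoin K s, ∀ m ∈ Submodule.span A g, m * a ∈ Submodule.span A g from
    fun a ha => one_mul a ▸ h a ha 1 h1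
  intro a ha
  induction ha using Algebra.adjoin_induction with
  | mem a ha =>
    have hle : Submodule.span A g ≤ (Submodule.span A g).comap (LinearMap.mulRight A a) :=
      Submodule.span_le.mpr fun u hu => hmul u hu a ha
    exact fun m hm => hle hm
  | algebraMap r =>
    intro m hm
    rw [← Algebra.commutes, ← Algebra.smul_def]
    exact Submodule.smul_of_tower_mem _ r hm
  | add a b _ _ iha ihb =>
    intro m hm
    rw [mul_add]
    exact add_mem (iha m hm) (ihb m hm)
  | mul a b _ _ iha ihb =>
    intro m hm
    rw [← mul_assoc]
    exact ihb _ (iha m hm)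

lemma adjoin_insert_subset_span_pow {s : Set R} {c : R} {n : ℕ} [NeZero n]
    (hc : ∀ a ∈ s, Commute c a) (hcn : c ^ n ∈ Algebra.adjoin K s) :
    (Algebra.adjoin K (insert c s) : Set R) ⊆
      Submodule.span (Algebra.adjoin K s) (Set.range fun i : Fin n => c ^ (i : ℕ)) := by
  set V := Submodule.span (Algebra.adjoin K s) (Set.range fun i : Fin n => c ^ (i : ℕ))
  have hpow : ∀ i < n, c ^ i ∈ V := fun i hi => Submodule.subset_span ⟨⟨i, hi⟩, rfl⟩
  have h1 : 1 ∈ V := by simpa only [pow_zero] using hpow 0 (NeZero.pos n)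
  have hsmul : ∀ a ∈ Algebra.adjoin K s, ∀ v ∈ V, a * v ∈ V :=
    fun a ha v hv => V.smul_mem ⟨a, ha⟩ hv
  refine adjoin_subset_span_of_mul_mem h1 ?_
  rintro _ ⟨i, rfl⟩ a (rfl | ha)
  · rw [← pow_succ]
    rcases (Nat.succ_le_of_lt i.isLt).lt_or_eq with hi | hi
    · exact hpow _ hi
    · simpa only [mul_one, ← hi] using hsmul _ hcn 1 h1
  · rw [((hc a ha).pow_left i).eq]
    exact hsmul a (Algebra.subset_adjoin ha) _ (hpow i i.isLt)

end Adjoin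

section Triple

variable {R : Type*} [Ring R]

/-- The noncommutative elementary polynomials `σ₁, σ₂, σ₃` evaluated at a triple, with the
zero-based indexing of `sig3`. -/
def elementary (x : Fin 3 → R) : Fin 3 → R :=
  ![x 0 + x 1 + x 2, x 0 * x 1 + x 0 * x 2 + x 1 * x 2, x 0 * x 1 * x 2]

/-- The commutator `c = [x₁, x₂]`; for triples satisfying `ElementaryCentral` it is also
`[x₂, x₃]` and `[x₃, x₁]`. -/
def cyclicCommutator (x : Fin 3 → R) : R :=
  x 0 * x 1 - x 1 * x 0

/-- The element `d`: the sum over the orbit of `x₁x₂x₁` under cyclic shifts of the indices. -/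
def orbitSum (x : Fin 3 → R) : R :=
  ∑ i, x i * x (i + 1) * x i

/-- A triple commuting with its elementary polynomials `σ₁` and `σ₂`. It then commutes with `σ₃`
too, because `σ₃` is invariant under cyclic shifts, so these relations define `R′`. -/
structure ElementaryCentral (x : Fin 3 → R) : Prop where
  commute_zero (i : Fin 3) : Commute (x i) (elementary x 0)
  commute_one (i : Fin 3) : Commute (x i) (elementary x 1)

lemma add_rotate_eq_sum {M : Type*} [AddCommMonoid M] (f : Fin 3 → M) (i : Fin 3) :
    f i + f (i + 1) + f (i + 2) = ∑ j, f j := by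
  rw [← Equiv.sum_comp (Equiv.addLeft i) f, Fin.sum_univ_three]
  simp only [Equiv.coe_addLeft, add_zero]

lemma map_elementary {S F : Type*} [Ring S] [FunLike F R S] [RingHomClass F R S] (f : F)
    (x : Fin 3 → R) (k : Fin 3) : f (elementary x k) = elementary (fun i => f (x i)) k := by
  fin_cases k <;> simp [elementary]

lemma elementary_zero (x : Fin 3 → R) (i : Fin 3) :
    elementary x 0 = x i + x (i + 1) + x (i + 2) := by
  rw [add_rotate_eq_sum, Fin.sum_univ_three]
  rfl

namespace ElementaryCentral

variable {x : Fin 3 → R} (hx : ElementaryCentral x)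

include hx

lemma commutator_eq (i : Fin 3) : x i * x (i + 1) - x (i + 1) * x i = cyclicCommutator x := by
  have h0 : x 0 * (x 0 + x 1 + x 2) = (x 0 + x 1 + x 2) * x 0 := hx.commute_zero 0
  have h1 : x 1 * (x 0 + x 1 + x 2) = (x 0 + x 1 + x 2) * x 1 := hx.commute_zero 1
  fin_cases i
  · rfl
  · change x 1 * x 2 - x 2 * x 1 = x 0 * x 1 - x 1 * x 0
    linear_combination (norm := noncomm_ring) h1
  · change x 2 * x 0 - x 0 * x 2 = x 0 * x 1 - x 1 * x 0
    linear_combination (norm := noncomm_ring) -h0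

lemma elementary_one (i : Fin 3) :
    elementary x 1 = x i * x (i + 1) + x i * x (i + 2) + x (i + 1) * x (i + 2) := by
  have h0 : x 0 * (x 0 + x 1 + x 2) = (x 0 + x 1 + x 2) * x 0 := hx.commute_zero 0
  have h2 : x 2 * (x 0 + x 1 + x 2) = (x 0 + x 1 + x 2) * x 2 := hx.commute_zero 2
  change x 0 * x 1 + x 0 * x 2 + x 1 * x 2 = _
  fin_cases i
  · rfl
  · change _ = x 1 * x 2 + x 1 * x 0 + x 2 * x 0
    linear_combination (norm := noncomm_ring) h0
  · change _ = x 2 * x 0 + x 2 * x 1 + x 0 * x 1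
    linear_combination (norm := noncomm_ring) -h2

lemma adjacent_mul_eq (i : Fin 3) :
    x (i + 1) * x (i + 2) = elementary x 1 - elementary x 0 * x i + x i ^ 2 := by
  rw [← (hx.commute_zero i).eq, hx.elementary_one i, elementary_zero x i]
  noncomm_ring

-- The right-hand side of `adjacent_mul_eq` commutes with `x i`, by centrality of `σ₁` and `σ₂`.
lemma mul_mul_rotate (i : Fin 3) :
    x i * x (i + 1) * x (i + 2) = x (i + 1) * x (i + 2) * x i := by
  have h : Commute (x i) (x (i + 1) * x (i + 2)) := by
    rw [hx.adjacent_mul_eq]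
    exact ((hx.commute_one i).sub_right ((hx.commute_zero i).mul_right (.refl _))).add_right
      (.pow_right (.refl _) 2)
  rw [mul_assoc, h.eq]

lemma elementary_two (i : Fin 3) : elementary x 2 = x i * x (i + 1) * x (i + 2) := by
  fin_cases i
  · rfl
  · exact hx.mul_mul_rotate 0
  · exact (hx.mul_mul_rotate 0).trans (hx.mul_mul_rotate 1)

lemma elementary_rotate (k : Fin 3) : elementary (fun i => x (i + 1)) k = elementary x k := by
  fin_cases k
  · exact (elementary_zero x 1).symm
  · exact (hx.elementary_one 1).symm
  · exact (hx.elementary_two 1).symm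

lemma cube_eq (i : Fin 3) :
    x i ^ 3 = elementary x 0 * x i ^ 2 - elementary x 1 * x i + elementary x 2 := by
  rw [hx.elementary_two i, hx.mul_mul_rotate, hx.adjacent_mul_eq]
  noncomm_ring

-- With `c = [x (i + 1), x (i + 2)]` on the left and `c = [x i, x (i + 1)]` on the right, both
-- sides are `σ₃ - x (i + 2) * x (i + 1) * x i`.
lemma semiconjBy_commutator (i : Fin 3) :
    SemiconjBy (cyclicCommutator x) (x i) (x (i + 2)) := by
  have hcomm := hx.commutator_eq (i + 1)
  have hrot := hx.mul_mul_rotate (i + 1)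
  simp only [add_assoc, Fin.reduceAdd, add_zero] at hcomm hrot
  calc cyclicCommutator x * x i
    _ = x (i + 1) * x (i + 2) * x i - x (i + 2) * x (i + 1) * x i := by rw [← hcomm, sub_mul]
    _ = x (i + 2) * (x i * x (i + 1) - x (i + 1) * x i) := by
        rw [hrot, mul_sub, mul_assoc, mul_assoc]
    _ = x (i + 2) * cyclicCommutator x := by rw [hx.commutator_eq]

lemma commute_commutator_elementary (k : Fin 3) :
    Commute (cyclicCommutator x) (elementary x k) := by
  have hc := hx.semiconjBy_commutator
  have of_commute {a : R} (ha : ∀ i, Commute (x i) a) : Commute (cyclicCommutator x) a :=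
    .sub_left (.mul_left (ha 0) (ha 1)) (.mul_left (ha 1) (ha 0))
  fin_cases k
  · exact of_commute hx.commute_zero
  · exact of_commute hx.commute_one
  · have h : SemiconjBy (cyclicCommutator x) (x 0 * x 1 * x 2) (x 2 * x 0 * x 1) :=
      ((hc 0).mul_right (hc 1)).mul_right (hc 2)
    exact h.eq.trans (congrArg (· * cyclicCommutator x) (hx.elementary_two 2).symm)

lemma commute_commutator_orbitSum : Commute (cyclicCommutator x) (orbitSum x) := by
  have hterm (i : Fin 3) : cyclicCommutator x * (x (i + 1) * x (i + 2) * x (i + 1)) =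
      x i * x (i + 1) * x i * cyclicCommutator x := by
    have h1 := hx.semiconjBy_commutator (i + 1)
    have h2 := hx.semiconjBy_commutator (i + 2)
    simp only [add_assoc, Fin.reduceAdd, add_zero] at h1 h2
    exact ((h1.mul_right h2).mul_right h1).eq
  calc cyclicCommutator x * orbitSum x
    _ = ∑ i, cyclicCommutator x * (x (i + 1) * x (i + 2) * x (i + 1)) := by
        rw [orbitSum, ← Equiv.sum_comp (Equiv.addRight 1), mul_sum]
        simp only [Equiv.coe_addRight, add_assoc, Fin.reduceAdd]
    _ = orbitSum x * cyclicCommutator x := by simp only [hterm, orbitSum, sum_mul]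

lemma sq_mul_succ_eq (i : Fin 3) :
    x i ^ 2 * x (i + 1) = x i * x (i + 1) * x i + cyclicCommutator x * x (i + 1) := by
  have hc := (hx.semiconjBy_commutator (i + 1)).eq
  simp only [add_assoc, Fin.reduceAdd, add_zero] at hc
  rw [hc, ← hx.commutator_eq i]
  noncomm_ring

lemma orbit_term_succ (i : Fin 3) :
    x (i + 1) * x (i + 2) * x (i + 1) = x i * x (i + 1) * x i +
      ((elementary x 1 + cyclicCommutator x) * x (i + 1) - elementary x 0 * (x i * x (i + 1))) := by
  rw [hx.adjacent_mul_eq, add_mul, hx.sq_mul_succ_eq]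
  noncomm_ring

lemma sum_sq_eq :
    ∑ i, x i ^ 2 = elementary x 0 ^ 2 - 2 * elementary x 1 + cyclicCommutator x := by
  have h (i : Fin 3) : x i ^ 2 =
      x (i + 1) * x (i + 2) - elementary x 1 + elementary x 0 * x i := by
    rw [hx.adjacent_mul_eq]
    abel
  have hsum : ∑ i, x (i + 1) * x (i + 2) = elementary x 1 + cyclicCommutator x := by
    rw [← hx.commutator_eq 2, Fin.sum_univ_three]
    change x 1 * x 2 + x 2 * x 0 + x 0 * x 1 =
      x 0 * x 1 + x 0 * x 2 + x 1 * x 2 + (x 2 * x 0 - x 0 * x 2)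
    abel
  simp only [h, sum_add_distrib, sum_sub_distrib, hsum, ← mul_sum, sum_const, card_univ,
    Fintype.card_fin, Fin.sum_univ_three]
  change _ + _ * elementary x 0 = _
  noncomm_ring

end ElementaryCentral

section Invariants

variable (K : Type*) [CommRing K] [Algebra K R] (x : Fin 3 → R)

/-- The generators `σ₁, σ₂, σ₃, c³, d` of the coefficient algebra `Z₀`. -/
def coefficientGenerators : Set R :=
  {elementary x 0, elementary x 1, elementary x 2, cyclicCommutator x ^ 3, orbitSum x}

/-- The algebra `Z₀[c]`, into which the trace over the cyclic group maps the span of the powers. -/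
def extendedCoefficients : Subalgebra K R :=
  Algebra.adjoin K (insert (cyclicCommutator x) (coefficientGenerators x))

/-- The left `Z₀[c]`-module spanned by `1`, `xᵢ` and `xᵢ²`. -/
def powerSpan : Submodule (extendedCoefficients K x) R :=
  Submodule.span (extendedCoefficients K x)
    (Set.range fun ik : Fin 3 × Fin 3 => x ik.1 ^ (ik.2 : ℕ))

lemma cyclicCommutator_mem : cyclicCommutator x ∈ extendedCoefficients K x :=
  Algebra.subset_adjoin (Set.mem_insert _ _)

lemma elementary_mem (k : Fin 3) : elementary x k ∈ extendedCoefficients K x := by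
  refine Algebra.subset_adjoin (Set.mem_insert_of_mem _ ?_)
  fin_cases k <;> simp [coefficientGenerators]

lemma orbitSum_mem : orbitSum x ∈ extendedCoefficients K x :=
  Algebra.subset_adjoin (Set.mem_insert_of_mem _ (by simp [coefficientGenerators]))

variable {K x}

lemma left_mul_mem_powerSpan {a m : R} (ha : a ∈ extendedCoefficients K x)
    (hm : m ∈ powerSpan K x) : a * m ∈ powerSpan K x :=
  (powerSpan K x).smul_mem ⟨a, ha⟩ hm

lemma pow_mem_powerSpan (i k : Fin 3) : x i ^ (k : ℕ) ∈ powerSpan K x :=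
  Submodule.subset_span ⟨(i, k), rfl⟩

lemma apply_mem_powerSpan (i : Fin 3) : x i ∈ powerSpan K x :=
  pow_one (x i) ▸ pow_mem_powerSpan i 1

lemma mem_powerSpan_of_mem {a : R} (ha : a ∈ extendedCoefficients K x) : a ∈ powerSpan K x := by
  have h1 : 1 ∈ powerSpan K x := pow_zero (x 0) ▸ pow_mem_powerSpan 0 0
  exact mul_one a ▸ left_mul_mem_powerSpan ha h1

namespace ElementaryCentral

variable (hx : ElementaryCentral x)

include hx

lemma adjacent_mul_mem_powerSpan (i : Fin 3) : x (i + 1) * x (i + 2) ∈ powerSpan K x := by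
  rw [hx.adjacent_mul_eq]
  exact add_mem (sub_mem (mem_powerSpan_of_mem (elementary_mem K x 1))
    (left_mul_mem_powerSpan (elementary_mem K x 0) (apply_mem_powerSpan i))) (pow_mem_powerSpan i 2)

lemma generator_mul_mem_powerSpan (i j : Fin 3) : x i * x j ∈ powerSpan K x := by
  have hadj (i : Fin 3) : x i * x (i + 1) ∈ powerSpan K x := by
    simpa only [add_assoc, Fin.reduceAdd, add_zero] using hx.adjacent_mul_mem_powerSpan (i + 2)
  obtain rfl | rfl | rfl : j = i ∨ j = i + 1 ∨ i = j + 1 := by decide +revert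
  · exact pow_two (x j) ▸ pow_mem_powerSpan j 2
  · exact hadj i
  · rw [← sub_sub_self (x j * x (j + 1)) (x (j + 1) * x j), hx.commutator_eq]
    exact sub_mem (hadj j) (mem_powerSpan_of_mem (cyclicCommutator_mem K x))

-- Consecutive terms of the sum `d` agree modulo the span, so each is a third of `d` there.
lemma orbit_term_mem_powerSpan (h3 : IsUnit (3 : K)) (i : Fin 3) :
    x i * x (i + 1) * x i ∈ powerSpan K x := by
  set a : Fin 3 → R := fun j => x j * x (j + 1) * x j with ha
  have hstep (j : Fin 3) : a (j + 1) - a j ∈ powerSpan K x := by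
    simp only [ha, add_assoc, Fin.reduceAdd]
    rw [hx.orbit_term_succ, add_sub_cancel_left]
    exact sub_mem (left_mul_mem_powerSpan
      (add_mem (elementary_mem K x 1) (cyclicCommutator_mem K x)) (apply_mem_powerSpan _))
      (left_mul_mem_powerSpan (elementary_mem K x 0) (hx.generator_mul_mem_powerSpan _ _))
  have hthree : (3 : K) • a i =
      orbitSum x - (a (i + 1) - a i) - ((a (i + 2) - a (i + 1)) + (a (i + 1) - a i)) := by
    rw [orbitSum, ← add_rotate_eq_sum a i, Algebra.smul_def, map_ofNat]
    noncomm_ring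
  have hstep' : a (i + 2) - a (i + 1) ∈ powerSpan K x := by
    simpa only [add_assoc, Fin.reduceAdd] using hstep (i + 1)
  refine (((powerSpan K x).restrictScalars K).smul_mem_iff_of_isUnit h3).mp (hthree ▸ ?_)
  exact sub_mem (sub_mem (mem_powerSpan_of_mem (orbitSum_mem K x)) (hstep i))
    (add_mem hstep' (hstep i))

lemma sq_mul_mem_powerSpan (h3 : IsUnit (3 : K)) (i j : Fin 3) :
    x i ^ 2 * x j ∈ powerSpan K x := by
  have hself : x i ^ 2 * x i ∈ powerSpan K x := by
    rw [← pow_succ, hx.cube_eq]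
    exact add_mem (sub_mem
      (left_mul_mem_powerSpan (elementary_mem K x 0) (pow_mem_powerSpan i 2))
      (left_mul_mem_powerSpan (elementary_mem K x 1) (apply_mem_powerSpan i)))
      (mem_powerSpan_of_mem (elementary_mem K x 2))
  have hsucc : x i ^ 2 * x (i + 1) ∈ powerSpan K x := by
    rw [hx.sq_mul_succ_eq]
    exact add_mem (hx.orbit_term_mem_powerSpan h3 i)
      (left_mul_mem_powerSpan (cyclicCommutator_mem K x) (apply_mem_powerSpan _))
  have hcases : ∀ i j : Fin 3, j = i ∨ j = i + 1 ∨ j = i + 2 := by decide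
  obtain rfl | rfl | rfl := hcases i j
  · exact hself
  · exact hsucc
  · have hlast : x i ^ 2 * x (i + 2) =
        elementary x 0 * x i ^ 2 - x i ^ 2 * x i - x i ^ 2 * x (i + 1) := by
      rw [← ((hx.commute_zero i).pow_left 2).eq, elementary_zero x i]
      noncomm_ring
    rw [hlast]
    exact sub_mem (sub_mem
      (left_mul_mem_powerSpan (elementary_mem K x 0) (pow_mem_powerSpan i 2)) hself) hsucc

theorem adjoin_subset_powerSpan (h3 : IsUnit (3 : K)) :
    (Algebra.adjoin K (Set.range x) : Set R) ⊆ powerSpan K x := by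
  refine adjoin_subset_span_of_mul_mem (mem_powerSpan_of_mem (one_mem _)) ?_
  rintro _ ⟨⟨i, k⟩, rfl⟩ _ ⟨j, rfl⟩
  change x i ^ (k : ℕ) * x j ∈ powerSpan K x
  fin_cases k
  · simpa using apply_mem_powerSpan j
  · simpa using hx.generator_mul_mem_powerSpan i j
  · exact hx.sq_mul_mem_powerSpan h3 i j

lemma sum_pow_mem (k : Fin 3) : ∑ i, x i ^ (k : ℕ) ∈ extendedCoefficients K x := by
  fin_cases k
  · simp
  · simpa [elementary_zero x 0, Fin.sum_univ_three] using elementary_mem K x 0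
  · change ∑ i, x i ^ 2 ∈ _
    rw [hx.sum_sq_eq]
    exact add_mem (sub_mem (pow_mem (elementary_mem K x 0) 2)
      (mul_mem (ofNat_mem _ 2) (elementary_mem K x 1))) (cyclicCommutator_mem K x)

variable {φ : R →ₐ[K] R} (hφ : ∀ i, φ (x i) = x (i + 1))

include hφ

lemma map_elementary_eq_self (k : Fin 3) : φ (elementary x k) = elementary x k := by
  rw [map_elementary, ← hx.elementary_rotate]
  simp only [hφ]

lemma map_of_mem_extendedCoefficients {a : R} (ha : a ∈ extendedCoefficients K x) : φ a = a := by
  have hc : φ (cyclicCommutator x) = cyclicCommutator x := by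
    conv_lhs => rw [← hx.commutator_eq 0]
    rw [map_sub, map_mul, map_mul, hφ, hφ]
    exact hx.commutator_eq 1
  have hd : φ (orbitSum x) = orbitSum x := by
    simp only [orbitSum, map_sum, map_mul, hφ]
    exact Equiv.sum_comp (Equiv.addRight 1) fun i => x i * x (i + 1) * x i
  refine AlgHom.adjoin_le_equalizer φ (AlgHom.id K R) ?_ ha
  rintro _ (rfl | rfl | rfl | rfl | rfl | rfl)
  · exact hc
  · exact hx.map_elementary_eq_self hφ 0
  · exact hx.map_elementary_eq_self hφ 1
  · exact hx.map_elementary_eq_self hφ 2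
  · rw [map_pow, hc, AlgHom.id_apply]
  · exact hd

lemma trace_mem_extendedCoefficients {m : R} (hm : m ∈ powerSpan K x) :
    m + φ m + φ (φ m) ∈ extendedCoefficients K x := by
  induction hm using Submodule.span_induction with
  | mem m hm =>
    obtain ⟨⟨i, k⟩, rfl⟩ := hm
    simp only [map_pow, hφ, add_assoc i 1 1, Fin.reduceAdd]
    rw [add_rotate_eq_sum fun j => x j ^ (k : ℕ)]
    exact hx.sum_pow_mem k
  | zero => simp
  | add m n _ _ ihm ihn =>
    simp only [map_add]
    convert add_mem ihm ihn using 1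
    abel
  | smul a m _ ih =>
    simp only [Subalgebra.smul_def, smul_eq_mul, map_mul,
      hx.map_of_mem_extendedCoefficients hφ a.2, ← mul_add]
    exact mul_mem a.2 ih

theorem mem_extendedCoefficients_of_fixed (h3 : IsUnit (3 : K)) {p : R}
    (hp : p ∈ Algebra.adjoin K (Set.range x)) (hpφ : φ p = p) :
    p ∈ extendedCoefficients K x := by
  have htrace := hx.trace_mem_extendedCoefficients hφ (hx.adjoin_subset_powerSpan h3 hp)
  have hthree : p + φ p + φ (φ p) = (3 : K) • p := by
    rw [hpφ, hpφ, Algebra.smul_def, map_ofNat]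
    noncomm_ring
  rw [hthree] at htrace
  exact ((extendedCoefficients K x).toSubmodule.smul_mem_iff_of_isUnit h3).mp htrace

omit hφ

lemma exists_quadratic_of_mem {a : R} (ha : a ∈ extendedCoefficients K x) :
    ∃ z0 z1 z2 : R,
      z0 ∈ Algebra.adjoin K (coefficientGenerators x) ∧
      z1 ∈ Algebra.adjoin K (coefficientGenerators x) ∧
      z2 ∈ Algebra.adjoin K (coefficientGenerators x) ∧
      a = z0 + z1 * cyclicCommutator x + z2 * cyclicCommutator x ^ 2 := by
  have hcomm : ∀ a ∈ coefficientGenerators x, Commute (cyclicCommutator x) a := by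
    rintro _ (rfl | rfl | rfl | rfl | rfl)
    · exact hx.commute_commutator_elementary 0
    · exact hx.commute_commutator_elementary 1
    · exact hx.commute_commutator_elementary 2
    · exact .pow_right (.refl _) 3
    · exact hx.commute_commutator_orbitSum
  have hcube : cyclicCommutator x ^ 3 ∈ Algebra.adjoin K (coefficientGenerators x) :=
    Algebra.subset_adjoin (by simp [coefficientGenerators])
  obtain ⟨z, hz⟩ := Submodule.mem_span_range_iff_exists_fun _ |>.mp
    (adjoin_insert_subset_span_pow hcomm hcube ha)
  refine ⟨z 0, z 1, z 2, (z 0).2, (z 1).2, (z 2).2, ?_⟩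
  simpa [Fin.sum_univ_three, Subalgebra.smul_def] using hz.symm

end ElementaryCentral

theorem invariant_eq_quadratic_in_c_general {K R : Type*} [CommRing K] [Ring R] [Algebra K R]
    (h3 : IsUnit (3 : K)) {x : Fin 3 → R} (hx : ElementaryCentral x)
    {φ : R →ₐ[K] R} (hφ : ∀ i, φ (x i) = x (i + 1))
    {p : R} (hp : p ∈ Algebra.adjoin K (Set.range x)) (hpφ : φ p = p) :
    ∃ z0 z1 z2 : R,
      z0 ∈ Algebra.adjoin K (coefficientGenerators x) ∧
      z1 ∈ Algebra.adjoin K (coefficientGenerators x) ∧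
      z2 ∈ Algebra.adjoin K (coefficientGenerators x) ∧
      p = z0 + z1 * cyclicCommutator x + z2 * cyclicCommutator x ^ 2 :=
  hx.exists_quadratic_of_mem (hx.mem_extendedCoefficients_of_fixed hφ h3 hp hpφ)

end Invariants

end Triple

section QuotientRing

variable (K : Type*) [Field K]

lemma S3_eq_elementary (k : Fin 3) : S3 K k = elementary (X3 K) k :=
  map_elementary (mk3 K) (x3 K) k

lemma X3_commute_S3 (i k : Fin 3) : Commute (X3 K i) (S3 K k) := by
  have h : mk3 K (x3 K i * sig3 K k) = mk3 K (sig3 K k * x3 K i) :=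
    RingQuot.mkAlgHom_rel K ⟨i, k, rfl, rfl⟩
  rwa [map_mul, map_mul] at h

lemma elementaryCentral_X3 : ElementaryCentral (X3 K) where
  commute_zero i := S3_eq_elementary K 0 ▸ X3_commute_S3 K i 0
  commute_one i := S3_eq_elementary K 1 ▸ X3_commute_S3 K i 1

lemma adjoin_range_X3 : Algebra.adjoin K (Set.range (X3 K)) = ⊤ := by
  have h : Set.range (X3 K) = mk3 K '' Set.range (FreeAlgebra.ι K) := by
    rw [← Set.range_comp]
    rfl
  rw [h, ← AlgHom.map_adjoin, FreeAlgebra.adjoin_range_ι, Algebra.map_top, AlgHom.range_eq_top]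
  exact RingQuot.mkAlgHom_surjective K (rel3 K)

lemma mk3_rot3_x3 (i : Fin 3) : mk3 K (rot3 K (x3 K i)) = X3 K (i + 1) := by
  rw [rot3, x3, FreeAlgebra.lift_ι_apply, finRotate_apply]
  rfl

lemma mk3_rot3_sig3 (k : Fin 3) : mk3 K (rot3 K (sig3 K k)) = S3 K k := by
  have h : rot3 K (sig3 K k) = elementary (fun i => rot3 K (x3 K i)) k :=
    map_elementary (rot3 K) (x3 K) k
  simp only [h, map_elementary, mk3_rot3_x3, S3_eq_elementary,
    (elementaryCentral_X3 K).elementary_rotate]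

/-- The cyclic rotation of `R′` induced by `rot3`, as an algebra endomorphism. -/
noncomputable def rotateR3 : R3 K →ₐ[K] R3 K :=
  RingQuot.liftAlgHom K ⟨(mk3 K).comp (rot3 K), by
    rintro _ _ ⟨i, k, rfl, rfl⟩
    simp only [AlgHom.comp_apply, map_mul, mk3_rot3_x3, mk3_rot3_sig3, (X3_commute_S3 K _ k).eq]⟩

lemma rotateR3_mk3 (q : P3 K) : rotateR3 K (mk3 K q) = mk3 K (rot3 K q) :=
  RingQuot.liftAlgHom_mkAlgHom_apply ..

lemma rotateR3_X3 (i : Fin 3) : rotateR3 K (X3 K i) = X3 K (i + 1) :=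
  (rotateR3_mk3 K (x3 K i)).trans (mk3_rot3_x3 K i)

lemma coefficientGenerators_X3 :
    coefficientGenerators (X3 K) = {S3 K 0, S3 K 1, S3 K 2, c3 K ^ 3, d3 K} := by
  have hd : orbitSum (X3 K) = d3 K := by
    rw [orbitSum, Fin.sum_univ_three]
    rfl
  simp only [coefficientGenerators, S3_eq_elementary, hd]
  rfl

end QuotientRing

/-- Every `G`-invariant element `p` of `R′` (case `n = 3`) — i.e. one such that
for every representative `q ∈ P` of `p` and every `g ∈ G` the class of `q^g` is
again `p` — has the form `p = z_0 + z_1c + z_2c²` with the `z_i` in the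
`K`-subalgebra `Z_0` of `R′` generated by `σ_1, σ_2, σ_3, c³, d`. -/
theorem invariant_eq_quadratic_in_c (K : Type*) [Field K] [CharZero K]
    (p : R3 K)
    (hp : ∀ (m : ℕ) (q : P3 K), mk3 K q = p → mk3 K ((⇑(rot3 K))^[m] q) = p) :
    ∃ z0 z1 z2 : R3 K,
      z0 ∈ Algebra.adjoin K {S3 K 0, S3 K 1, S3 K 2, (c3 K) ^ 3, d3 K} ∧
      z1 ∈ Algebra.adjoin K {S3 K 0, S3 K 1, S3 K 2, (c3 K) ^ 3, d3 K} ∧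
      z2 ∈ Algebra.adjoin K {S3 K 0, S3 K 1, S3 K 2, (c3 K) ^ 3, d3 K} ∧
      p = z0 + z1 * c3 K + z2 * (c3 K) ^ 2 := by
  obtain ⟨q, rfl⟩ := RingQuot.mkAlgHom_surjective K (rel3 K) p
  have hfixed : rotateR3 K (mk3 K q) = mk3 K q := (rotateR3_mk3 K q).trans (hp 1 q rfl)
  rw [← coefficientGenerators_X3]
  exact invariant_eq_quadratic_in_c_general (.mk0 3 three_ne_zero) (elementaryCentral_X3 K)
    (rotateR3_X3 K) (adjoin_range_X3 K ▸ Algebra.mem_top) hfixed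
end

section
/- The set of G-invariant elements of R′ is a commutative subring of R′: any two elements of R′ fixed by G commute with each other. -/
open Finset

/-!
Put `s = x + y + z`, `e = x * y + x * z + y * z` and `c = x * y - y * x`. Centrality of `s` gives
`c = [x, y] = [y, z] = [z, x]`, and centrality of `e` then gives `c * y = x * c` and its rotations:
moving `c` past an element rotates that element. Hence `c` commutes with every invariant.

Moreover each generator is a root of the central polynomial `t ^ 3 - s * t ^ 2 + e * t - x * y * z`,
so, as in the commutative case, the algebra is spanned by the six monomials `x ^ i * y ^ j` with
`i < 3` and `j < 2`, with coefficients in the subalgebra generated by `s`, `e`, `x * y * z`, `c`.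
If `p` is invariant, then `3 * p` is the trace `p + g p + g (g p)`, and only the monomial
`x ^ 2 * y` has a trace `d` outside the coefficient algebra. As `d` is invariant, it commutes with
`c`, hence with all coefficients, so all traces commute.
-/

section Generation

variable {K A : Type*} [CommRing K] [Ring A] [Algebra K A] {t : Set A}

lemma mul_mem_of_mem_subalgebra {E : Subalgebra K A} (M : Submodule E A) {b m : A}
    (hb : b ∈ E) (hm : m ∈ M) : b * m ∈ M :=
  M.smul_mem ⟨b, hb⟩ hm

lemma eq_top_of_one_mem_of_mul_mem (ht : Algebra.adjoin K t = ⊤) {E : Subalgebra K A}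
    {M : Submodule E A} (one_mem : 1 ∈ M) (mul_mem : ∀ a ∈ t, ∀ m ∈ M, m * a ∈ M) : M = ⊤ := by
  have mul_mem_of_mem_adjoin (a : A) (ha : a ∈ Algebra.adjoin K t) : ∀ m ∈ M, m * a ∈ M := by
    induction ha using Algebra.adjoin_induction with
    | mem a ha => exact mul_mem a ha
    | algebraMap r =>
      intro m hm
      rw [← Algebra.commutes]
      exact mul_mem_of_mem_subalgebra M (E.algebraMap_mem r) hm
    | add a b _ _ iha ihb => exact fun m hm ↦ mul_add m a b ▸ M.add_mem (iha m hm) (ihb m hm)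
    | mul a b _ _ iha ihb => exact fun m hm ↦ mul_assoc m a b ▸ ihb _ (iha m hm)
  exact Submodule.eq_top_iff'.2 fun a ↦
    one_mul a ▸ mul_mem_of_mem_adjoin a (ht ▸ Algebra.mem_top) 1 one_mem

lemma commute_of_adjoin_eq_top (ht : Algebra.adjoin K t = ⊤) {b : A}
    (hb : ∀ a ∈ t, Commute b a) (a : A) : Commute b a :=
  Algebra.commute_of_mem_adjoin_of_forall_mem_commute (ht ▸ Algebra.mem_top) hb

end Generation

/-- The elements `x + y + z` and `x * y + x * z + y * z` are central. Centrality of the third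
elementary polynomial is not part of the definition: it follows when `x`, `y`, `z` generate, see
`CentralElementary.commute_prod`. -/
structure CentralElementary {A : Type*} [Ring A] (x y z : A) : Prop where
  commute_sum (a : A) : Commute (x + y + z) a
  commute_esymm (a : A) : Commute (x * y + x * z + y * z) a

namespace CentralElementary

section Ring

variable {A : Type*} [Ring A] {x y z : A} (h : CentralElementary x y z)
include h

lemma lie_rotate : ⁅y, z⁆ = ⁅x, y⁆ := by
  have sum_mul_y : (x + y + z) * y = y * (x + y + z) := h.commute_sum y
  rw [Ring.lie_def, Ring.lie_def, ← sub_eq_zero, ← sub_eq_zero.2 sum_mul_y.symm]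
  noncomm_ring

lemma esymm_rotate : y * z + y * x + z * x = x * y + x * z + y * z := by
  have sum_mul_x : (x + y + z) * x = x * (x + y + z) := h.commute_sum x
  rw [← sub_eq_zero, ← sub_eq_zero.2 sum_mul_x]
  noncomm_ring

lemma rotate : CentralElementary y z x where
  commute_sum := by simpa only [add_comm, add_left_comm] using h.commute_sum
  commute_esymm := by simpa only [h.esymm_rotate] using h.commute_esymm

lemma semiconjBy_lie_x : SemiconjBy ⁅x, y⁆ x z := by
  have lie_mul_y_add_z : ⁅x, y⁆ * (y + z) = (x + y) * ⁅x, y⁆ := by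
    have esymm_mul_y : (x * y + x * z + y * z) * y = y * (x * y + x * z + y * z) :=
      h.commute_esymm y
    nth_rw 2 [← h.lie_rotate]
    rw [Ring.lie_def, Ring.lie_def, ← sub_eq_zero, ← sub_eq_zero.2 esymm_mul_y]
    noncomm_ring
  calc ⁅x, y⁆ * x = ⁅x, y⁆ * (x + y + z) - ⁅x, y⁆ * (y + z) := by noncomm_ring
    _ = (x + y + z) * ⁅x, y⁆ - (x + y) * ⁅x, y⁆ := by
      rw [lie_mul_y_add_z, (h.commute_sum ⁅x, y⁆).eq]
    _ = z * ⁅x, y⁆ := by noncomm_ring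

lemma semiconjBy_lie_y : SemiconjBy ⁅x, y⁆ y x := h.lie_rotate ▸ h.rotate.semiconjBy_lie_x

lemma semiconjBy_lie_z : SemiconjBy ⁅x, y⁆ z y := h.lie_rotate ▸ h.rotate.semiconjBy_lie_y

lemma sum_sq : x ^ 2 + y ^ 2 + z ^ 2 =
    (x + y + z) ^ 2 - 2 * (x * y + x * z + y * z) + ⁅x, y⁆ := by
  calc x ^ 2 + y ^ 2 + z ^ 2
      = (x + y + z) ^ 2 - (y * z + y * x + z * x) - (x * y + x * z + y * z) + ⁅y, z⁆ := by
        rw [Ring.lie_def]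
        noncomm_ring
    _ = (x + y + z) ^ 2 - 2 * (x * y + x * z + y * z) + ⁅x, y⁆ := by
        rw [h.esymm_rotate, h.lie_rotate]
        noncomm_ring

lemma sum_mul_rotate : x * y + y * z + z * x = x * y + x * z + y * z + ⁅x, y⁆ := by
  rw [← h.lie_rotate, ← h.rotate.lie_rotate, Ring.lie_def]
  abel

lemma prod_rotate : y * z * x = x * y * z := by
  have z_mul_x : z * x = ⁅x, y⁆ + x * z := by
    rw [← h.lie_rotate, ← h.rotate.lie_rotate, Ring.lie_def, sub_add_cancel]
  calc y * z * x = y * ⁅x, y⁆ + y * x * z := by rw [mul_assoc, z_mul_x, mul_add, mul_assoc]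
    _ = ⁅x, y⁆ * z + y * x * z := by rw [h.semiconjBy_lie_z.eq]
    _ = x * y * z := by rw [Ring.lie_def]; noncomm_ring

lemma commute_prod_x : Commute (x * y * z) x := by
  calc x * y * z * x = x * (y * z * x) := by simp only [mul_assoc]
    _ = x * (x * y * z) := by rw [h.prod_rotate]

lemma commute_lie_orbitSum : Commute ⁅x, y⁆ (x ^ 2 * y + y ^ 2 * z + z ^ 2 * x) := by
  have semiconjBy_rotation :
      SemiconjBy ⁅x, y⁆ (x ^ 2 * y + y ^ 2 * z + z ^ 2 * x) (z ^ 2 * x + x ^ 2 * y + y ^ 2 * z) :=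
    (((h.semiconjBy_lie_x.pow_right 2).mul_right h.semiconjBy_lie_y).add_right
      ((h.semiconjBy_lie_y.pow_right 2).mul_right h.semiconjBy_lie_z)).add_right
      ((h.semiconjBy_lie_z.pow_right 2).mul_right h.semiconjBy_lie_x)
  rwa [add_assoc (z ^ 2 * x), add_comm (z ^ 2 * x)] at semiconjBy_rotation

lemma sq_y : y ^ 2 =
    (x + y + z) * (x + y) - (x * y + x * z + y * z) + ⁅x, y⁆ - x ^ 2 - x * y := by
  rw [(h.commute_sum (x + y)).eq, Ring.lie_def]
  noncomm_ring

lemma pow_add_three (n : ℕ) : x ^ (n + 3) =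
    (x + y + z) * x ^ (n + 2) - (x * y + x * z + y * z) * x ^ (n + 1) + x * y * z * x ^ n := by
  have cube : x ^ 3 = x ^ 2 * (x + y + z) - x * (x * y + x * z + y * z) + x * y * z := by
    noncomm_ring
  rw [add_comm n 3, add_comm n 2, add_comm n 1, pow_add, pow_add, pow_add, pow_one, cube,
    ← (h.commute_sum (x ^ 2)).eq, ← (h.commute_esymm x).eq]
  noncomm_ring

lemma pow_mul_y_mul_x (n : ℕ) : x ^ n * y * x = x ^ (n + 1) * y - ⁅x, y⁆ * y ^ n := by
  rw [(h.semiconjBy_lie_y.pow_right n).eq, Ring.lie_def]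
  noncomm_ring

lemma pow_mul_y_mul_y (n : ℕ) : x ^ n * y * y =
    (x + y + z) * (x ^ (n + 1) + x ^ n * y) - (x * y + x * z + y * z) * x ^ n + ⁅x, y⁆ * y ^ n
      - x ^ (n + 2) - x ^ (n + 1) * y := by
  have pow_mul_sum := (h.commute_sum (x ^ n)).eq
  have pow_mul_esymm := (h.commute_esymm (x ^ n)).eq
  calc x ^ n * y * y = x ^ n * y ^ 2 := by noncomm_ring
    _ = x ^ n * (x + y + z) * (x + y) - x ^ n * (x * y + x * z + y * z) + x ^ n * ⁅x, y⁆
        - x ^ (n + 2) - x ^ (n + 1) * y := by rw [h.sq_y]; noncomm_ring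
    _ = (x + y + z) * (x ^ (n + 1) + x ^ n * y) - (x * y + x * z + y * z) * x ^ n
        + ⁅x, y⁆ * y ^ n - x ^ (n + 2) - x ^ (n + 1) * y := by
      rw [← pow_mul_sum, ← pow_mul_esymm, ← (h.semiconjBy_lie_y.pow_right n).eq]
      noncomm_ring

end Ring

end CentralElementary

/-- The subalgebra generated by the elementary polynomials, the commutator `⁅x, y⁆` and the orbit
sum of `x ^ 2 * y`. It contains every trace over the cyclic group of rotations of `x`, `y`, `z`. -/
def cyclicInvariants (K : Type*) {A : Type*} [CommRing K] [Ring A] [Algebra K A] (x y z : A) :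
    Subalgebra K A :=
  Algebra.adjoin K {x + y + z, x * y + x * z + y * z, x * y * z, ⁅x, y⁆,
    x ^ 2 * y + y ^ 2 * z + z ^ 2 * x}

namespace cyclicInvariants

variable {K A : Type*} [CommRing K] [Ring A] [Algebra K A] {x y z : A}

lemma sum_mem : x + y + z ∈ cyclicInvariants K x y z :=
  Algebra.subset_adjoin (by simp)

lemma esymm_mem : x * y + x * z + y * z ∈ cyclicInvariants K x y z :=
  Algebra.subset_adjoin (by simp)

lemma prod_mem : x * y * z ∈ cyclicInvariants K x y z :=
  Algebra.subset_adjoin (by simp)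

lemma lie_mem : ⁅x, y⁆ ∈ cyclicInvariants K x y z :=
  Algebra.subset_adjoin (by simp)

lemma orbitSum_mem : x ^ 2 * y + y ^ 2 * z + z ^ 2 * x ∈ cyclicInvariants K x y z :=
  Algebra.subset_adjoin (by simp)

end cyclicInvariants

/-- The monomials `x ^ i * y ^ j` with `i < 3` and `j < 2`. Artin's basis of the polynomial ring in
three variables over the symmetric polynomials has this form. -/
def artinMonomials {A : Type*} [Monoid A] (x y : A) : Set A :=
  {a | ∃ i < 3, ∃ j < 2, x ^ i * y ^ j = a}

/-- The span of the monomials `x ^ i * y ^ j`, `i < 3`, `j < 2`, with coefficients in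
`cyclicInvariants K x y z` acting by multiplication on the left. -/
def artinSpan (K : Type*) {A : Type*} [CommRing K] [Ring A] [Algebra K A] (x y z : A) :
    Submodule (cyclicInvariants K x y z) A :=
  Submodule.span (cyclicInvariants K x y z) (artinMonomials x y)

namespace CentralElementary

section Span

variable {K A : Type*} [CommRing K] [Ring A] [Algebra K A] {x y z : A}
  (h : CentralElementary x y z)
include h

lemma pow_mul_pow_mem_artinSpan (n : ℕ) {j : ℕ} (hj : j < 2) :
    x ^ n * y ^ j ∈ artinSpan K x y z := by
  induction n using Nat.strong_induction_on with
  | _ n ih =>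
    rcases lt_or_ge n 3 with hn | hn
    · exact Submodule.subset_span ⟨n, hn, j, hj, rfl⟩
    · obtain ⟨k, rfl⟩ := Nat.exists_eq_add_of_le' hn
      rw [h.pow_add_three, add_mul, sub_mul]
      simp only [mul_assoc _ (x ^ _)]
      exact add_mem (sub_mem (mul_mem_of_mem_subalgebra _ cyclicInvariants.sum_mem (ih _ (by lia)))
        (mul_mem_of_mem_subalgebra _ cyclicInvariants.esymm_mem (ih _ (by lia))))
        (mul_mem_of_mem_subalgebra _ cyclicInvariants.prod_mem (ih _ (by lia)))

lemma pow_mem_artinSpan (n : ℕ) : x ^ n ∈ artinSpan K x y z := by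
  simpa only [pow_zero, mul_one] using h.pow_mul_pow_mem_artinSpan n two_pos

lemma pow_mul_y_mem_artinSpan (n : ℕ) : x ^ n * y ∈ artinSpan K x y z := by
  simpa only [pow_one] using h.pow_mul_pow_mem_artinSpan n one_lt_two

lemma pow_y_mem_artinSpan {n : ℕ} (hn : n < 3) : y ^ n ∈ artinSpan K x y z := by
  set M := artinSpan K x y z
  have one_mem : 1 ∈ M := by simpa only [pow_zero] using h.pow_mem_artinSpan 0
  have x_mem : x ∈ M := by simpa only [pow_one] using h.pow_mem_artinSpan 1
  have y_mem : y ∈ M := by simpa only [pow_zero, one_mul] using h.pow_mul_y_mem_artinSpan 0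
  have xy_mem : x * y ∈ M := by simpa only [pow_one] using h.pow_mul_y_mem_artinSpan 1
  have mem_of_mem {b : A} (hb : b ∈ cyclicInvariants K x y z) : b ∈ M :=
    mul_one b ▸ mul_mem_of_mem_subalgebra M hb one_mem
  interval_cases n
  · rwa [pow_zero]
  · rwa [pow_one]
  · rw [h.sq_y]
    exact sub_mem (sub_mem (add_mem (sub_mem
      (mul_mem_of_mem_subalgebra M cyclicInvariants.sum_mem (add_mem x_mem y_mem))
      (mem_of_mem cyclicInvariants.esymm_mem))
      (mem_of_mem cyclicInvariants.lie_mem)) (h.pow_mem_artinSpan 2)) xy_mem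

lemma mul_x_mem_artinSpan {m : A} (hm : m ∈ artinSpan K x y z) :
    m * x ∈ artinSpan K x y z := by
  refine (Submodule.map_span_le (LinearMap.mulRight _ x) _ _).2 ?_ (Submodule.mem_map_of_mem hm)
  rintro _ ⟨i, hi, j, hj, rfl⟩
  rw [LinearMap.mulRight_apply]
  interval_cases j
  · rw [pow_zero, mul_one, ← pow_succ]
    exact h.pow_mem_artinSpan (i + 1)
  · rw [pow_one, h.pow_mul_y_mul_x]
    exact sub_mem (h.pow_mul_y_mem_artinSpan (i + 1))
      (mul_mem_of_mem_subalgebra _ cyclicInvariants.lie_mem (h.pow_y_mem_artinSpan hi))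

lemma mul_y_mem_artinSpan {m : A} (hm : m ∈ artinSpan K x y z) :
    m * y ∈ artinSpan K x y z := by
  refine (Submodule.map_span_le (LinearMap.mulRight _ y) _ _).2 ?_ (Submodule.mem_map_of_mem hm)
  rintro _ ⟨i, hi, j, hj, rfl⟩
  rw [LinearMap.mulRight_apply]
  interval_cases j
  · rw [pow_zero, mul_one]
    exact h.pow_mul_y_mem_artinSpan i
  · rw [pow_one, h.pow_mul_y_mul_y]
    exact sub_mem (sub_mem (add_mem (sub_mem
      (mul_mem_of_mem_subalgebra _ cyclicInvariants.sum_mem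
        (add_mem (h.pow_mem_artinSpan (i + 1)) (h.pow_mul_y_mem_artinSpan i)))
      (mul_mem_of_mem_subalgebra _ cyclicInvariants.esymm_mem (h.pow_mem_artinSpan i)))
      (mul_mem_of_mem_subalgebra _ cyclicInvariants.lie_mem (h.pow_y_mem_artinSpan hi)))
      (h.pow_mem_artinSpan (i + 2))) (h.pow_mul_y_mem_artinSpan (i + 1))

lemma artinSpan_eq_top (hgen : Algebra.adjoin K {x, y, z} = ⊤) : artinSpan K x y z = ⊤ := by
  refine eq_top_of_one_mem_of_mul_mem hgen (by simpa only [pow_zero] using h.pow_mem_artinSpan 0) ?_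
  rintro a (rfl | rfl | rfl) m hm
  · exact h.mul_x_mem_artinSpan hm
  · exact h.mul_y_mem_artinSpan hm
  · have mul_z : m * a = (x + y + a) * m - m * x - m * y := by
      rw [(h.commute_sum m).eq]
      noncomm_ring
    rw [mul_z]
    exact sub_mem (sub_mem (mul_mem_of_mem_subalgebra _ cyclicInvariants.sum_mem hm)
      (h.mul_x_mem_artinSpan hm)) (h.mul_y_mem_artinSpan hm)

lemma commute_prod (hgen : Algebra.adjoin K {x, y, z} = ⊤) (a : A) : Commute (x * y * z) a := by
  refine commute_of_adjoin_eq_top hgen ?_ a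
  rintro b (rfl | rfl | rfl)
  · exact h.commute_prod_x
  · exact h.prod_rotate ▸ h.rotate.commute_prod_x
  · exact h.prod_rotate ▸ h.rotate.prod_rotate ▸ h.rotate.rotate.commute_prod_x

lemma isMulCommutative_cyclicInvariants (hgen : Algebra.adjoin K {x, y, z} = ⊤) :
    IsMulCommutative (cyclicInvariants K x y z) := by
  refine Algebra.isMulCommutative_adjoin K ?_
  rintro a (rfl | rfl | rfl | rfl | rfl) b hb
  · exact h.commute_sum b
  · exact h.commute_esymm b
  · exact h.commute_prod hgen b
  · rcases hb with rfl | rfl | rfl | rfl | rfl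
    exacts [(h.commute_sum _).symm, (h.commute_esymm _).symm, (h.commute_prod hgen _).symm, rfl,
      h.commute_lie_orbitSum]
  · rcases hb with rfl | rfl | rfl | rfl | rfl
    exacts [(h.commute_sum _).symm, (h.commute_esymm _).symm, (h.commute_prod hgen _).symm,
      h.commute_lie_orbitSum.symm, rfl]

end Span

section Rotation

variable {K A : Type*} [CommRing K] [Ring A] [Algebra K A] {x y z : A}
  (h : CentralElementary x y z) {g : A →ₐ[K] A} (hx : g x = y) (hy : g y = z) (hz : g z = x)
include h hx hy hz

lemma map_eq_self_of_mem_cyclicInvariants {b : A} (hb : b ∈ cyclicInvariants K x y z) :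
    g b = b := by
  refine AlgHom.eqOn_adjoin_iff (ψ := AlgHom.id K A).2 ?_ hb
  rintro _ (rfl | rfl | rfl | rfl | rfl) <;>
    simp only [map_add, map_mul, map_pow, Ring.lie_def, map_sub, hx, hy, hz, AlgHom.id_apply]
  · abel
  · exact h.esymm_rotate
  · exact h.prod_rotate
  · simpa only [Ring.lie_def] using h.lie_rotate
  · abel

lemma trace_mem_of_mem_artinMonomials {a : A} (ha : a ∈ artinMonomials x y) :
    a + g a + g (g a) ∈ cyclicInvariants K x y z := by
  have sum_mem : x + y + z ∈ cyclicInvariants K x y z := cyclicInvariants.sum_mem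
  obtain ⟨i, hi, j, hj, rfl⟩ := ha
  interval_cases i <;> interval_cases j <;>
    simp only [pow_zero, pow_one, one_mul, mul_one, map_one, map_mul, map_pow, hx, hy, hz]
  · exact add_mem (add_mem (one_mem _) (one_mem _)) (one_mem _)
  · convert sum_mem using 1
    abel
  · exact sum_mem
  · exact h.sum_mul_rotate ▸ add_mem cyclicInvariants.esymm_mem cyclicInvariants.lie_mem
  · exact h.sum_sq ▸ add_mem (sub_mem (pow_mem sum_mem 2)
      (mul_mem (ofNat_mem _ 2) cyclicInvariants.esymm_mem)) cyclicInvariants.lie_mem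
  · exact cyclicInvariants.orbitSum_mem

variable (hgen : Algebra.adjoin K {x, y, z} = ⊤)
include hgen

lemma trace_mem (a : A) : a + g a + g (g a) ∈ cyclicInvariants K x y z := by
  have ha : a ∈ artinSpan K x y z := h.artinSpan_eq_top hgen ▸ Submodule.mem_top
  induction ha using Submodule.span_induction with
  | mem a ha => exact h.trace_mem_of_mem_artinMonomials hx hy hz ha
  | zero => simpa only [map_zero, add_zero] using zero_mem _
  | add a b _ _ iha ihb =>
    simp only [map_add]
    convert add_mem iha ihb using 1
    abel
  | smul b a _ ih =>
    have map_b : g b = b := h.map_eq_self_of_mem_cyclicInvariants hx hy hz b.2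
    simpa only [Subalgebra.smul_def, smul_eq_mul, map_mul, map_b, mul_add] using mul_mem b.2 ih

theorem commute_of_map_eq_self (three_regular : IsLeftRegular (3 : A)) {p q : A} (hp : g p = p)
    (hq : g q = q) : Commute p q := by
  have three_mul_mem {a : A} (ha : g a = a) : 3 * a ∈ cyclicInvariants K x y z := by
    have trace_eq : a + g a + g (g a) = 3 * a := by
      rw [ha, ha]
      noncomm_ring
    exact trace_eq ▸ h.trace_mem hx hy hz hgen a
  have := h.isMulCommutative_cyclicInvariants hgen
  have three_mul_commute : 3 * p * (3 * q) = 3 * q * (3 * p) :=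
    setLike_mul_comm (three_mul_mem hp) (three_mul_mem hq)
  refine three_regular (three_regular ?_)
  calc 3 * (3 * (p * q)) = 3 * p * (3 * q) := by noncomm_ring
    _ = 3 * q * (3 * p) := three_mul_commute
    _ = 3 * (3 * (q * p)) := by noncomm_ring

end Rotation

end CentralElementary

section R3

variable (K : Type*) [Field K]

lemma mk3_surjective : Function.Surjective (mk3 K) :=
  RingQuot.mkAlgHom_surjective K (rel3 K)

lemma adjoin_X3 : Algebra.adjoin K {X3 K 0, X3 K 1, X3 K 2} = ⊤ := by
  have image_generators : {X3 K 0, X3 K 1, X3 K 2} = mk3 K '' Set.range (FreeAlgebra.ι K) := by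
    ext a
    simp [X3, x3, Fin.exists_fin_succ, eq_comm]
  rw [image_generators, ← AlgHom.map_adjoin, FreeAlgebra.adjoin_range_ι, Algebra.map_top,
    AlgHom.range_eq_top]
  exact mk3_surjective K

lemma commute_S3_X3 (k i : Fin 3) : Commute (S3 K k) (X3 K i) := by
  have mk3_rel : mk3 K (x3 K i * sig3 K k) = mk3 K (sig3 K k * x3 K i) :=
    RingQuot.mkAlgHom_rel K ⟨i, k, rfl, rfl⟩
  simpa only [commute_iff_eq, S3, X3, map_mul] using mk3_rel.symm

lemma commute_S3 (k : Fin 3) (a : R3 K) : Commute (S3 K k) a := by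
  refine commute_of_adjoin_eq_top (adjoin_X3 K) ?_ a
  rintro _ (rfl | rfl | rfl) <;> exact commute_S3_X3 K k _

lemma S3_zero : S3 K 0 = X3 K 0 + X3 K 1 + X3 K 2 := by
  simp [S3, X3, sig3]

lemma S3_one : S3 K 1 = X3 K 0 * X3 K 1 + X3 K 0 * X3 K 2 + X3 K 1 * X3 K 2 := by
  simp [S3, X3, sig3]

lemma S3_two : S3 K 2 = X3 K 0 * X3 K 1 * X3 K 2 := by
  simp [S3, X3, sig3]

lemma centralElementary_X3 : CentralElementary (X3 K 0) (X3 K 1) (X3 K 2) where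
  commute_sum := by simpa only [S3_zero] using commute_S3 K 0
  commute_esymm := by simpa only [S3_one] using commute_S3 K 1

/-- The endomorphism `x_i ↦ x_{i+1}` of `R′` induced by `rot3`. -/
noncomputable def rotR3 : R3 K →ₐ[K] R3 K :=
  RingQuot.liftAlgHom K ⟨(mk3 K).comp (rot3 K), by
    rintro _ _ ⟨i, k, rfl, rfl⟩
    simpa only [AlgHom.comp_apply, map_mul, mk3_rot3_sig3, mk3_rot3_x3] using
      (commute_S3_X3 K k (i + 1)).eq.symm⟩

lemma rotR3_mk3 (r : P3 K) : rotR3 K (mk3 K r) = mk3 K (rot3 K r) := by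
  simp [rotR3, mk3]

lemma rotR3_X3 (i : Fin 3) : rotR3 K (X3 K i) = X3 K (i + 1) := by
  rw [X3, rotR3_mk3, mk3_rot3_x3]

variable {K} in
lemma rotR3_eq_self {p : R3 K}
    (hp : ∀ (m : ℕ) (r : P3 K), mk3 K r = p → mk3 K ((⇑(rot3 K))^[m] r) = p) :
    rotR3 K p = p := by
  obtain ⟨r, rfl⟩ := mk3_surjective K p
  rw [rotR3_mk3]
  exact hp 1 r rfl

end R3

theorem invariants_commute_general (K : Type*) [Field K] (h3 : (3 : K) ≠ 0) (p q : R3 K)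
    (hp : ∀ (m : ℕ) (r : P3 K), mk3 K r = p → mk3 K ((⇑(rot3 K))^[m] r) = p)
    (hq : ∀ (m : ℕ) (r : P3 K), mk3 K r = q → mk3 K ((⇑(rot3 K))^[m] r) = q) :
    p * q = q * p := by
  have three_isUnit : IsUnit (3 : R3 K) := by
    simpa only [map_ofNat] using h3.isUnit.map (algebraMap K (R3 K))
  exact (centralElementary_X3 K).commute_of_map_eq_self (rotR3_X3 K 0) (rotR3_X3 K 1)
    (rotR3_X3 K 2) (adjoin_X3 K) three_isUnit.isRegular.left (rotR3_eq_self hp) (rotR3_eq_self hq)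

/-- The set of `G`-invariant elements of `R′` (case `n = 3`) is a commutative
subring: any two elements of `R′` fixed by (the descended action of) `G`
commute with each other. -/
theorem invariants_commute (K : Type*) [Field K] [CharZero K]
    (p q : R3 K)
    (hp : ∀ (m : ℕ) (r : P3 K), mk3 K r = p → mk3 K ((⇑(rot3 K))^[m] r) = p)
    (hq : ∀ (m : ℕ) (r : P3 K), mk3 K r = q → mk3 K ((⇑(rot3 K))^[m] r) = q) :
    p * q = q * p :=
  invariants_commute_general K three_ne_zero p q hp hq
end

section
/- Assume R′ is a domain. Then the center of R′ is exactly the K-subalgebra of R′ generated by σ_1, σ_2, σ_3, c³, and d. -/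
open Finset

/-!
Moving `c` across an element of `R′` rotates the generators: `a c = c ρ(a)` with `ρ x_i = x_{i+1}`.
Let `a` be central. As `c` can be cancelled, `ρ a = a`, so the image of `a` in the abelianization
`R′ / c R′ = K[X₀, X₁, X₂]` is invariant under cyclic rotation, hence a polynomial in the images of
`σ₁, σ₂, σ₃, d`. Subtracting that polynomial in `σ₁, σ₂, σ₃, d` leaves a central element of `c R′`.
If `c ^ n r` is central then `ρ^n(x) r = r x` for all `x`; when `3 ∤ n` the images of `x_i` and
`ρ^n(x_i)` differ, so `r` vanishes in the abelianization and another factor `c` splits off. The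
difference is therefore `c³ r` with `r` central. Since `c³` has positive degree, comparing
homogeneous components turns this into an induction on the degree.
-/

theorem mul_dvd_of_prime {M : Type*} [CommMonoidWithZero M] {p a b : M} (hp : Prime p)
    (hpa : ¬ p ∣ a) (hpb : p ∣ b) (hab : a ∣ b) : p * a ∣ b := by
  obtain ⟨q, rfl⟩ := hab
  exact mul_comm p a ▸ mul_dvd_mul_left a ((hp.dvd_or_dvd hpb).resolve_left hpa)

section PolynomialInvariants

open MvPolynomial

section Semiring

variable {σ R : Type*} [CommSemiring R]

theorem isSymmetric_of_closure_eq_top {s : Set (Equiv.Perm σ)} (hs : Subgroup.closure s = ⊤)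
    {f : MvPolynomial σ R} (hf : ∀ e ∈ s, rename e f = f) : f.IsSymmetric := by
  intro e
  have he : e ∈ Subgroup.closure s := hs ▸ Subgroup.mem_top e
  induction he using Subgroup.closure_induction with
  | mem e he => exact hf e he
  | one => simp
  | mul e₁ e₂ _ _ h₁ h₂ => rw [Equiv.Perm.coe_mul, ← rename_rename, h₂, h₁]
  | inv e _ h =>
    nth_rw 1 [← h]
    rw [rename_rename, ← Equiv.Perm.coe_mul, inv_mul_cancel]
    simp

theorem isSymmetric_fin_three {f : MvPolynomial (Fin 3) R} (hrot : rename (finRotate 3) f = f)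
    (hswap : rename (Equiv.swap (0 : Fin 3) 1) f = f) : f.IsSymmetric := by
  have hgen := Equiv.Perm.closure_cycle_adjacent_swap (σ := finRotate 3) isCycle_finRotate
    support_finRotate 0
  exact isSymmetric_of_closure_eq_top hgen (by rintro _ (rfl | rfl) <;> assumption)

theorem esymm_fin_three_one : esymm (Fin 3) R 1 = X 0 + X 1 + X 2 := by
  rw [esymm_one, Fin.sum_univ_three]

theorem esymm_fin_three_two : esymm (Fin 3) R 2 = X 0 * X 1 + X 0 * X 2 + X 1 * X 2 := by
  have hpairs : powersetCard 2 (univ : Finset (Fin 3)) = {{0, 1}, {0, 2}, {1, 2}} := by decide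
  rw [esymm, hpairs, sum_insert (by decide), sum_insert (by decide), sum_singleton,
    prod_pair (by decide), prod_pair (by decide), prod_pair (by decide), add_assoc]

theorem esymm_fin_three_three : esymm (Fin 3) R 3 = X 0 * X 1 * X 2 := by
  have htriples : powersetCard 3 (univ : Finset (Fin 3)) = {univ} := by decide
  rw [esymm, htriples, sum_singleton, Fin.prod_univ_three]

/-- The orbit sum of `X₀² X₁` under cyclic rotation of the three variables. -/
noncomputable def cyclicSum (R : Type*) [CommSemiring R] : MvPolynomial (Fin 3) R :=
  X 0 ^ 2 * X 1 + X 1 ^ 2 * X 2 + X 2 ^ 2 * X 0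

theorem rename_finRotate_cyclicSum : rename (finRotate 3) (cyclicSum R) = cyclicSum R := by
  simp only [cyclicSum, map_add, map_mul, map_pow, rename_X, finRotate_apply, zero_add,
    Fin.reduceAdd]
  ring

theorem rename_swap_rename_swap [DecidableEq σ] (i j : σ) (f : MvPolynomial σ R) :
    rename (Equiv.swap i j) (rename (Equiv.swap i j) f) = f := by
  rw [rename_rename, ← Equiv.Perm.coe_mul, Equiv.swap_mul_self]
  simp

theorem rename_swap_eq_rename_swap_zero_one {f : MvPolynomial (Fin 3) R}
    (hf : rename (finRotate 3) f = f) {i j : Fin 3} (hij : i ≠ j) :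
    rename (Equiv.swap i j) f = rename (Equiv.swap (0 : Fin 3) 1) f := by
  have hrot : ∀ e : Equiv.Perm (Fin 3), rename (e * finRotate 3 : Equiv.Perm _) f = rename e f :=
    fun e => by rw [Equiv.Perm.coe_mul, ← rename_rename, hf]
  have hcases : Equiv.swap i j = Equiv.swap 0 1 ∨ Equiv.swap i j = Equiv.swap 0 1 * finRotate 3 ∨
      Equiv.swap i j = Equiv.swap 0 1 * finRotate 3 * finRotate 3 := by
    revert i j
    decide
  rcases hcases with h | h | h <;> simp only [h, hrot]

theorem rename_finRotate_rename_swap {f : MvPolynomial (Fin 3) R}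
    (hf : rename (finRotate 3) f = f) :
    rename (finRotate 3) (rename (Equiv.swap (0 : Fin 3) 1) f) =
      rename (Equiv.swap (0 : Fin 3) 1) f := by
  have hconj : finRotate 3 * Equiv.swap 0 1 = Equiv.swap 0 2 := by decide
  rw [rename_rename, ← Equiv.Perm.coe_mul, hconj,
    rename_swap_eq_rename_swap_zero_one hf (by decide)]

end Semiring

variable {σ R : Type*} [CommRing R]

theorem mem_adjoin_esymm_of_isSymmetric [Fintype σ] {n : ℕ} (hn : Fintype.card σ ≤ n)
    {f : MvPolynomial σ R} (hf : f.IsSymmetric) :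
    f ∈ Algebra.adjoin R (Set.range fun i : Fin n => esymm σ R (i + 1)) := by
  obtain ⟨p, hp⟩ := esymmAlgHom_surjective (σ := σ) (R := R) hn ⟨f, hf⟩
  rw [Algebra.adjoin_range_eq_range_aeval]
  exact ⟨p, (esymmAlgHom_apply (σ := σ) (R := R) (n := n) p).symm.trans (congrArg Subtype.val hp)⟩

theorem X_sub_X_dvd_iff_rename_update_eq_zero [DecidableEq σ] {i j : σ} {p : MvPolynomial σ R} :
    X i - X j ∣ p ↔ rename (Function.update id i j) p = 0 := by
  constructor
  · rintro ⟨q, rfl⟩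
    obtain rfl | hji := eq_or_ne j i <;> simp [*]
  · intro h
    have hcomp : (Ideal.Quotient.mkₐ R (Ideal.span {X i - X j})).comp
        (rename (Function.update id i j)) = Ideal.Quotient.mkₐ R (Ideal.span {X i - X j}) := by
      refine algHom_ext fun k => ?_
      obtain rfl | hk := eq_or_ne k i
      · simpa using (Ideal.Quotient.eq.mpr (Ideal.mem_span_singleton_self (X k - X j))).symm
      · simp [hk]
    rw [← Ideal.mem_span_singleton, ← Ideal.Quotient.eq_zero_iff_mem,
      ← Ideal.Quotient.mkₐ_eq_mk R, ← hcomp, AlgHom.comp_apply, h, map_zero]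

theorem X_sub_X_ne_zero [Nontrivial R] {i j : σ} (hij : i ≠ j) :
    (X i - X j : MvPolynomial σ R) ≠ 0 :=
  sub_ne_zero.mpr (X_injective.ne hij)

theorem prime_X_sub_X [IsDomain R] {i j : σ} (hij : i ≠ j) :
    Prime (X i - X j : MvPolynomial σ R) := by
  classical
  refine ⟨X_sub_X_ne_zero hij, fun h => ?_, fun p q h => ?_⟩
  · simpa using X_sub_X_dvd_iff_rename_update_eq_zero.mp (h.dvd (a := 1))
  · simpa only [X_sub_X_dvd_iff_rename_update_eq_zero, map_mul, mul_eq_zero] using h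

theorem X_sub_X_dvd_sub_rename_swap [DecidableEq σ] (i j : σ) (p : MvPolynomial σ R) :
    X i - X j ∣ p - rename (Equiv.swap i j) p := by
  have hcomp : Function.update id i j ∘ Equiv.swap i j = Function.update id i j := by
    funext k
    simp only [Function.comp_apply, Equiv.swap_apply_def, Function.update_apply, id]
    split_ifs <;> simp_all
  rw [X_sub_X_dvd_iff_rename_update_eq_zero, map_sub, rename_rename, hcomp, sub_self]

theorem cyclicSum_sub_rename_swap :
    cyclicSum R - rename (Equiv.swap (0 : Fin 3) 1) (cyclicSum R) =
      (X 0 - X 1) * ((X 1 - X 2) * (X 0 - X 2)) := by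
  have h2 : Equiv.swap (0 : Fin 3) 1 2 = 2 := by decide
  simp only [cyclicSum, map_add, map_mul, map_pow, rename_X, Equiv.swap_apply_left,
    Equiv.swap_apply_right, h2]
  ring

theorem cyclicSum_sub_rename_swap_dvd [IsDomain R] {f : MvPolynomial (Fin 3) R}
    (hf : rename (finRotate 3) f = f) :
    cyclicSum R - rename (Equiv.swap (0 : Fin 3) 1) (cyclicSum R) ∣
      f - rename (Equiv.swap (0 : Fin 3) 1) f := by
  have hdvd {i j : Fin 3} (hij : i ≠ j) : X i - X j ∣ f - rename (Equiv.swap (0 : Fin 3) 1) f :=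
    rename_swap_eq_rename_swap_zero_one hf hij ▸ X_sub_X_dvd_sub_rename_swap i j f
  have hndvd {i j k l : Fin 3} (h : Function.update id i j k ≠ Function.update id i j l) :
      ¬ (X i - X j : MvPolynomial (Fin 3) R) ∣ X k - X l := by
    rw [X_sub_X_dvd_iff_rename_update_eq_zero, map_sub, rename_X, rename_X]
    exact X_sub_X_ne_zero h
  have h01 : Prime (X 0 - X 1 : MvPolynomial (Fin 3) R) := prime_X_sub_X (by decide)
  have h12 : Prime (X 1 - X 2 : MvPolynomial (Fin 3) R) := prime_X_sub_X (by decide)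
  rw [cyclicSum_sub_rename_swap]
  exact mul_dvd_of_prime h01 (h01.not_dvd_mul (hndvd (by decide)) (hndvd (by decide)))
    (hdvd (by decide)) (mul_dvd_of_prime h12 (hndvd (by decide)) (hdvd (by decide))
      (hdvd (by decide)))

theorem exists_isSymmetric_add_mul_cyclicSum [IsDomain R] {f : MvPolynomial (Fin 3) R}
    (hf : rename (finRotate 3) f = f) :
    ∃ g h : MvPolynomial (Fin 3) R, g.IsSymmetric ∧ h.IsSymmetric ∧ f = g + h * cyclicSum R := by
  -- `f = g + h d` with `g`, `h` symmetric forces `f - τ f = h (d - τ d)` for a transposition `τ`.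
  obtain ⟨h, hh⟩ := cyclicSum_sub_rename_swap_dvd hf
  set d := cyclicSum R with hd
  set δ := d - rename (Equiv.swap (0 : Fin 3) 1) d with hδ
  have hd_rot : rename (finRotate 3) d = d := rename_finRotate_cyclicSum
  have hδ_ne : δ ≠ 0 := by
    rw [hδ, hd, cyclicSum_sub_rename_swap]
    exact mul_ne_zero (X_sub_X_ne_zero (by decide))
      (mul_ne_zero (X_sub_X_ne_zero (by decide)) (X_sub_X_ne_zero (by decide)))
  have hh_rot : rename (finRotate 3) h = h := by
    have hrot := congrArg (rename (finRotate 3)) hh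
    rw [map_mul, map_sub, hf, rename_finRotate_rename_swap hf, hδ, map_sub, hd_rot,
      rename_finRotate_rename_swap hd_rot, ← hδ, hh] at hrot
    exact (mul_left_cancel₀ hδ_ne hrot).symm
  have hh_swap : rename (Equiv.swap (0 : Fin 3) 1) h = h := by
    have hswap := congrArg (rename (Equiv.swap (0 : Fin 3) 1)) hh
    rw [map_mul, map_sub, rename_swap_rename_swap, hδ, map_sub, rename_swap_rename_swap] at hswap
    exact mul_left_cancel₀ hδ_ne (by linear_combination hh + hswap)
  refine ⟨f - h * d, h, isSymmetric_fin_three ?_ ?_, isSymmetric_fin_three hh_rot hh_swap, by ring⟩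
  · rw [map_sub, map_mul, hf, hh_rot, hd_rot]
  · rw [map_sub, map_mul, hh_swap]
    linear_combination -hh

end PolynomialInvariants

section CommutatorIdentities

variable {R : Type*} [Ring R] {x y z c : R}

theorem commutator_eq_of_commute_add (h : Commute y (x + y + z)) :
    x * y - y * x = y * z - z * y := by
  linear_combination (norm := noncomm_ring) -h.eq

theorem mul_commutator_of_commute (hxy : x * y - y * x = c) (hyz : y * z - z * y = c)
    (hzx : z * x - x * z = c) (hx : Commute x (x * y + x * z + y * z))
    (hz : Commute z (x * y + x * z + y * z)) (hc : Commute c (x + y + z)) :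
    x * c = c * y ∧ y * c = c * z ∧ z * c = c * x := by
  have hxc : x * c = c * y := by
    linear_combination (norm := noncomm_ring) -hz.eq + hzx * y - x * hyz + hzx * z - hyz * z
  have hyc : y * c = c * z := by
    linear_combination (norm := noncomm_ring) -hx.eq + x * hxy - x * hzx + hxy * z - y * hzx
  refine ⟨hxc, hyc, ?_⟩
  linear_combination (norm := noncomm_ring) -hxc - hyc - hc.eq

theorem mul_mul_rotate (hxy : x * y - y * x = c) (hzx : z * x - x * z = c) (hyc : y * c = c * z) :
    y * z * x = x * y * z := by
  linear_combination (norm := noncomm_ring) y * hzx - hxy * z + hyc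

theorem commute_cyclic_sum (hxy : x * y - y * x = c) (hzx : z * x - x * z = c)
    (hxc : x * c = c * y) (hyc : y * c = c * z) (hzc : z * c = c * x) :
    Commute x (x * y * x + y * z * y + z * x * z) := by
  have hyzc : y * z * c = c * (z * x) := by
    rw [mul_assoc, hzc, ← mul_assoc, hyc, mul_assoc]
  have hzxc : z * x * c = c * (x * y) := by
    rw [mul_assoc, hxc, ← mul_assoc, hzc, mul_assoc]
  rw [commute_iff_eq, ← sub_eq_zero]
  calc x * (x * y * x + y * z * y + z * x * z) - (x * y * x + y * z * y + z * x * z) * x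
      = x * c * x + c * z * y - y * c * y + y * z * c - c * x * z - z * x * c := by
        linear_combination (norm := noncomm_ring)
          x * hxy * x + hxy * z * y - y * hzx * y + y * z * hxy - hzx * x * z - z * x * hzx
    _ = c * ((z * x - x * z) - (x * y - y * x)) := by
        rw [hxc, hyc, hyzc, hzxc]
        noncomm_ring
    _ = 0 := by rw [hxy, hzx, sub_self, mul_zero]

end CommutatorIdentities

theorem coeff_mem_adjoin_of_forall_eq_monomial {K R : Type*} [CommSemiring K] [Semiring R]
    [Algebra K R] (φ : R →ₐ[K] Polynomial R) {s : Set R}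
    (hs : ∀ x ∈ s, ∃ n, φ x = Polynomial.monomial n x) {a : R} (ha : a ∈ Algebra.adjoin K s)
    (n : ℕ) : (φ a).coeff n ∈ Algebra.adjoin K s := by
  induction ha using Algebra.adjoin_induction generalizing n with
  | mem x hx =>
    obtain ⟨m, hm⟩ := hs x hx
    rw [hm, Polynomial.coeff_monomial]
    split_ifs
    exacts [Algebra.subset_adjoin hx, zero_mem _]
  | algebraMap r =>
    rw [AlgHom.commutes, Polynomial.algebraMap_apply, Polynomial.coeff_C]
    split_ifs
    exacts [algebraMap_mem _ r, zero_mem _]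
  | add x y _ _ hx hy =>
    rw [map_add, Polynomial.coeff_add]
    exact add_mem (hx n) (hy n)
  | mul x y _ _ hx hy =>
    rw [map_mul, Polynomial.coeff_mul]
    exact sum_mem fun ij _ => mul_mem (hx ij.1) (hy ij.2)

namespace R3

variable {K : Type*} [Field K]

theorem commute_X3_S3 (i k : Fin 3) : Commute (X3 K i) (S3 K k) := by
  have h := RingQuot.mkAlgHom_rel K (s := rel3 K) (x := x3 K i * sig3 K k)
    (y := sig3 K k * x3 K i) ⟨i, k, rfl, rfl⟩
  rwa [map_mul, map_mul] at h

theorem lift_X3_sig3 (k : Fin 3) : FreeAlgebra.lift K (X3 K) (sig3 K k) = S3 K k :=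
  have h : FreeAlgebra.lift K (X3 K) = mk3 K :=
    FreeAlgebra.hom_ext (funext (FreeAlgebra.lift_ι_apply (X3 K)))
  DFunLike.congr_fun h (sig3 K k)

section ElementaryPolynomials

variable {B : Type*} [Semiring B] [Algebra K B] (v : Fin 3 → B)

theorem lift_sig3_zero : FreeAlgebra.lift K v (sig3 K 0) = v 0 + v 1 + v 2 := by
  simp [sig3, x3]

theorem lift_sig3_one :
    FreeAlgebra.lift K v (sig3 K 1) = v 0 * v 1 + v 0 * v 2 + v 1 * v 2 := by
  simp [sig3, x3]

theorem lift_sig3_two : FreeAlgebra.lift K v (sig3 K 2) = v 0 * v 1 * v 2 := by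
  simp [sig3, x3]

end ElementaryPolynomials

theorem S3_zero : S3 K 0 = X3 K 0 + X3 K 1 + X3 K 2 := by
  rw [← lift_X3_sig3, lift_sig3_zero]

theorem S3_one : S3 K 1 = X3 K 0 * X3 K 1 + X3 K 0 * X3 K 2 + X3 K 1 * X3 K 2 := by
  rw [← lift_X3_sig3, lift_sig3_one]

theorem S3_two : S3 K 2 = X3 K 0 * X3 K 1 * X3 K 2 := by
  rw [← lift_X3_sig3, lift_sig3_two]

@[elab_as_elim]
theorem induction {p : R3 K → Prop} (algebraMap : ∀ r, p (algebraMap K (R3 K) r))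
    (X : ∀ i, p (X3 K i)) (mul : ∀ a b, p a → p b → p (a * b))
    (add : ∀ a b, p a → p b → p (a + b)) (a : R3 K) : p a := by
  obtain ⟨a, rfl⟩ := RingQuot.mkAlgHom_surjective K (rel3 K) a
  change p (mk3 K a)
  induction a using FreeAlgebra.induction with
  | grade0 r => simpa using algebraMap r
  | grade1 i => exact X i
  | mul a b ha hb => simpa using mul _ _ ha hb
  | add a b ha hb => simpa using add _ _ ha hb

section Lift

variable {B : Type*} [Semiring B] [Algebra K B]

theorem algHom_ext {f g : R3 K →ₐ[K] B} (h : ∀ i, f (X3 K i) = g (X3 K i)) : f = g :=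
  RingQuot.ringQuot_ext' K f g (FreeAlgebra.hom_ext (funext h))

/-- The universal property of `R′`: three elements of a `K`-algebra that commute with their own
elementary polynomials determine an algebra homomorphism. -/
noncomputable def lift (v : Fin 3 → B)
    (hv : ∀ i k, Commute (v i) (FreeAlgebra.lift K v (sig3 K k))) : R3 K →ₐ[K] B :=
  RingQuot.liftAlgHom K ⟨FreeAlgebra.lift K v, by
    rintro _ _ ⟨i, k, rfl, rfl⟩
    simpa [x3] using (hv i k).eq⟩

variable {v : Fin 3 → B} {hv : ∀ i k, Commute (v i) (FreeAlgebra.lift K v (sig3 K k))}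

theorem lift_mk3 (a : P3 K) : lift v hv (mk3 K a) = FreeAlgebra.lift K v a :=
  RingQuot.liftAlgHom_mkAlgHom_apply ..

@[simp]
theorem lift_X3 (i : Fin 3) : lift v hv (X3 K i) = v i := by
  rw [X3, lift_mk3, x3, FreeAlgebra.lift_ι_apply]

@[simp]
theorem lift_S3 (k : Fin 3) : lift v hv (S3 K k) = FreeAlgebra.lift K v (sig3 K k) :=
  lift_mk3 _

end Lift

theorem mem_center_of_commute {a : R3 K} (h : ∀ i, Commute (X3 K i) a) :
    a ∈ Subalgebra.center K (R3 K) := by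
  rw [Subalgebra.mem_center_iff]
  intro b
  induction b using R3.induction with
  | algebraMap r => exact Algebra.commutes r a
  | X i => exact h i
  | mul b b' hb hb' => exact Commute.mul_left hb hb'
  | add b b' hb hb' => exact Commute.add_left hb hb'

theorem c3_ne_zero : c3 K ≠ 0 := by
  let v : Fin 3 → Matrix (Fin 2) (Fin 2) K := ![!![0, 1; 0, 1], !![0, -1; 0, 0], !![1, 0; 0, 0]]
  have hσ (k : Fin 3) : FreeAlgebra.lift K v (sig3 K k) = ![1, 0, 0] k := by
    fin_cases k <;> simp [v, sig3, x3, Matrix.one_fin_two, ← Matrix.ext_iff]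
  have hv (i k : Fin 3) : Commute (v i) (FreeAlgebra.lift K v (sig3 K k)) := by
    rw [hσ]
    fin_cases k <;> simp
  intro h
  simpa [c3, v] using congrArg (fun a => lift v hv a 0 1) h

theorem X3_mul_X3_sub (i : Fin 3) :
    X3 K i * X3 K (i + 1) - X3 K (i + 1) * X3 K i = c3 K := by
  have hcomm (i : Fin 3) : Commute (X3 K i) (X3 K 0 + X3 K 1 + X3 K 2) :=
    S3_zero (K := K) ▸ commute_X3_S3 i 0
  have h01 : X3 K 0 * X3 K 1 - X3 K 1 * X3 K 0 = c3 K := rfl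
  have h12 := (commutator_eq_of_commute_add (hcomm 1)).symm.trans h01
  have h20 := (commutator_eq_of_commute_add (by rw [← add_rotate]; exact hcomm 2)).symm.trans h12
  fin_cases i
  exacts [h01, h12, h20]

theorem X3_mul_c3 (i : Fin 3) : X3 K i * c3 K = c3 K * X3 K (i + 1) := by
  have hσ₁ : Commute (c3 K) (X3 K 0 + X3 K 1 + X3 K 2) := by
    rw [← S3_zero]
    exact ((commute_X3_S3 0 0).mul_left (commute_X3_S3 1 0)).sub_left
      ((commute_X3_S3 1 0).mul_left (commute_X3_S3 0 0))
  have hσ₂ (i : Fin 3) : Commute (X3 K i)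
      (X3 K 0 * X3 K 1 + X3 K 0 * X3 K 2 + X3 K 1 * X3 K 2) :=
    S3_one (K := K) ▸ commute_X3_S3 i 1
  obtain ⟨h0, h1, h2⟩ := mul_commutator_of_commute (X3_mul_X3_sub 0) (X3_mul_X3_sub 1)
    (X3_mul_X3_sub 2) (hσ₂ 0) (hσ₂ 2) hσ₁
  fin_cases i
  exacts [h0, h1, h2]

theorem lift_X3_add_one_sig3 (k : Fin 3) :
    FreeAlgebra.lift K (fun i => X3 K (i + 1)) (sig3 K k) = S3 K k := by
  have h01 : X3 K 0 * X3 K 1 - X3 K 1 * X3 K 0 = c3 K := X3_mul_X3_sub 0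
  have h20 : X3 K 2 * X3 K 0 - X3 K 0 * X3 K 2 = c3 K := X3_mul_X3_sub 2
  have h1c : X3 K 1 * c3 K = c3 K * X3 K 2 := X3_mul_c3 1
  fin_cases k
  · change FreeAlgebra.lift K _ (sig3 K 0) = S3 K 0
    simp only [lift_sig3_zero, S3_zero, Fin.reduceAdd]
    abel
  · change FreeAlgebra.lift K _ (sig3 K 1) = S3 K 1
    simp only [lift_sig3_one, S3_one, Fin.reduceAdd]
    linear_combination (norm := noncomm_ring) h20 - h01
  · change FreeAlgebra.lift K _ (sig3 K 2) = S3 K 2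
    simp only [lift_sig3_two, S3_two, Fin.reduceAdd]
    exact mul_mul_rotate h01 h20 h1c

/-- The automorphism of `R′` that rotates the generators, `x_i ↦ x_{i+1}`; moving `c` across an
element applies it. -/
noncomputable def rotate (K : Type*) [Field K] : R3 K →ₐ[K] R3 K :=
  lift (fun i => X3 K (i + 1)) fun i k =>
    (lift_X3_add_one_sig3 (K := K) k).symm ▸ commute_X3_S3 (i + 1) k

@[simp]
theorem rotate_X3 (i : Fin 3) : rotate K (X3 K i) = X3 K (i + 1) :=
  lift_X3 i

theorem rotate_d3 : rotate K (d3 K) = d3 K := by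
  simp only [d3, map_add, map_mul, rotate_X3]
  exact (add_rotate ..).symm

theorem rotate_rotate_rotate (a : R3 K) : rotate K (rotate K (rotate K a)) = a := by
  have h : ((rotate K).comp (rotate K)).comp (rotate K) = AlgHom.id K (R3 K) :=
    algHom_ext fun i => by simp [add_assoc]
  exact DFunLike.congr_fun h a

theorem mul_c3 (a : R3 K) : a * c3 K = c3 K * rotate K a := by
  induction a using R3.induction with
  | algebraMap r => rw [AlgHom.commutes, Algebra.commutes]
  | X i => rw [rotate_X3, X3_mul_c3]
  | mul a b ha hb => rw [map_mul, mul_assoc, hb, ← mul_assoc, ha, mul_assoc]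
  | add a b ha hb => rw [map_add, add_mul, ha, hb, mul_add]

theorem mul_c3_pow (n : ℕ) (a : R3 K) : a * c3 K ^ n = c3 K ^ n * (rotate K)^[n] a := by
  induction n generalizing a with
  | zero => simp
  | succ n ih => rw [pow_succ', ← mul_assoc, mul_c3, mul_assoc, ih, ← mul_assoc,
      Function.iterate_succ_apply]

theorem c3_pow_three_mem_center : c3 K ^ 3 ∈ Subalgebra.center K (R3 K) :=
  Subalgebra.mem_center_iff.mpr fun a => (mul_c3_pow 3 a).trans <| by
    rw [show (rotate K)^[3] a = a from rotate_rotate_rotate a]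

theorem d3_mem_center : d3 K ∈ Subalgebra.center K (R3 K) := by
  have h0 : Commute (X3 K 0) (d3 K) :=
    commute_cyclic_sum (X3_mul_X3_sub 0) (X3_mul_X3_sub 2) (X3_mul_c3 0) (X3_mul_c3 1) (X3_mul_c3 2)
  have h1 : Commute (X3 K 1) (d3 K) := by simpa [rotate_d3] using h0.map (rotate K)
  have h2 : Commute (X3 K 2) (d3 K) := by simpa [rotate_d3] using h1.map (rotate K)
  refine mem_center_of_commute fun i => ?_
  fin_cases i
  exacts [h0, h1, h2]

/-- The abelianization `R′ → K[X₀, X₁, X₂]`, with kernel `c R′`. -/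
noncomputable def toMvPolynomial (K : Type*) [Field K] : R3 K →ₐ[K] MvPolynomial (Fin 3) K :=
  lift MvPolynomial.X fun _ _ => Commute.all _ _

@[simp]
theorem toMvPolynomial_X3 (i : Fin 3) : toMvPolynomial K (X3 K i) = MvPolynomial.X i :=
  lift_X3 i

theorem toMvPolynomial_S3 (k : Fin 3) :
    toMvPolynomial K (S3 K k) = MvPolynomial.esymm (Fin 3) K (k + 1) := by
  rw [toMvPolynomial, lift_S3]
  fin_cases k
  · exact (lift_sig3_zero _).trans esymm_fin_three_one.symm
  · exact (lift_sig3_one _).trans esymm_fin_three_two.symm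
  · exact (lift_sig3_two _).trans esymm_fin_three_three.symm

theorem toMvPolynomial_d3 : toMvPolynomial K (d3 K) = cyclicSum K := by
  simp only [d3, cyclicSum, map_add, map_mul, toMvPolynomial_X3]
  ring

theorem toMvPolynomial_rotate (a : R3 K) :
    toMvPolynomial K (rotate K a) = MvPolynomial.rename (finRotate 3) (toMvPolynomial K a) := by
  have h : (toMvPolynomial K).comp (rotate K) =
      (MvPolynomial.rename (finRotate 3)).comp (toMvPolynomial K) :=
    algHom_ext fun i => by simp
  exact DFunLike.congr_fun h a

theorem commute_apply_X3 {B : Type*} [Ring B] [Algebra K B] (f : R3 K →ₐ[K] B)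
    (hf : f (c3 K) = 0) (i j : Fin 3) : Commute (f (X3 K i)) (f (X3 K j)) := by
  have h (i : Fin 3) : Commute (f (X3 K i)) (f (X3 K (i + 1))) := by
    rw [commute_iff_eq, ← sub_eq_zero, ← map_mul, ← map_mul, ← map_sub, X3_mul_X3_sub, hf]
  obtain rfl | rfl | rfl : j = i ∨ j = i + 1 ∨ i = j + 1 := by decide +revert
  exacts [Commute.refl _, h i, (h j).symm]

open scoped IsMulCommutative in
theorem apply_eq_zero_of_toMvPolynomial_eq_zero {B : Type*} [Ring B] [Algebra K B]
    (f : R3 K →ₐ[K] B) (hf : f (c3 K) = 0) {a : R3 K} (ha : toMvPolynomial K a = 0) :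
    f a = 0 := by
  let s : Set B := Set.range fun i => f (X3 K i)
  have hcomm : ∀ x ∈ s, ∀ y ∈ s, x * y = y * x := by
    rintro _ ⟨i, rfl⟩ _ ⟨j, rfl⟩
    exact commute_apply_X3 f hf i j
  have : IsMulCommutative (Algebra.adjoin K s) := Algebra.isMulCommutative_adjoin K hcomm
  let g : MvPolynomial (Fin 3) K →ₐ[K] Algebra.adjoin K s :=
    MvPolynomial.aeval fun i => ⟨f (X3 K i), Algebra.subset_adjoin ⟨i, rfl⟩⟩
  have hfg : f = (Algebra.adjoin K s).val.comp (g.comp (toMvPolynomial K)) :=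
    algHom_ext fun i => by simp [g]
  rw [hfg, AlgHom.comp_apply, AlgHom.comp_apply, ha, map_zero, map_zero]

theorem c3_dvd_of_toMvPolynomial_eq_zero {a : R3 K} (ha : toMvPolynomial K a = 0) : c3 K ∣ a := by
  let I : Ideal (R3 K) := Ideal.span {c3 K}
  have hmem {a : R3 K} : a ∈ I ↔ c3 K ∣ a := by
    simp only [I, Ideal.mem_span_singleton']
    constructor
    · rintro ⟨r, rfl⟩
      exact ⟨_, mul_c3 r⟩
    · rintro ⟨r, rfl⟩
      exact ⟨rotate K (rotate K r), by rw [mul_c3, rotate_rotate_rotate]⟩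
  have : I.IsTwoSided := ⟨fun b hb => hmem.mpr ((hmem.mp hb).mul_right b)⟩
  refine hmem.mp (Ideal.Quotient.eq_zero_iff_mem.mp ?_)
  exact apply_eq_zero_of_toMvPolynomial_eq_zero (Ideal.Quotient.mkₐ K I)
    (Ideal.Quotient.eq_zero_iff_mem.mpr (Ideal.mem_span_singleton_self _)) ha

theorem toMvPolynomial_eq_zero_of_c3_pow_mul_mem_center (hc : IsLeftRegular (c3 K)) {n : ℕ}
    {i j : Fin 3} (hij : i ≠ j) (hn : (rotate K)^[n] (X3 K i) = X3 K j) {r : R3 K}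
    (hr : c3 K ^ n * r ∈ Subalgebra.center K (R3 K)) : toMvPolynomial K r = 0 := by
  have htwist : X3 K j * r = r * X3 K i := by
    refine hc.pow n ?_
    calc c3 K ^ n * (X3 K j * r) = X3 K i * (c3 K ^ n * r) := by
          rw [← mul_assoc, ← mul_assoc, mul_c3_pow, hn]
      _ = c3 K ^ n * (r * X3 K i) := by rw [Subalgebra.mem_center_iff.mp hr, mul_assoc]
  have hπ := congrArg (toMvPolynomial K) htwist
  rw [map_mul, map_mul, toMvPolynomial_X3, toMvPolynomial_X3, mul_comm, ← sub_eq_zero,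
    ← mul_sub] at hπ
  exact (mul_eq_zero.mp hπ).resolve_right (X_sub_X_ne_zero hij.symm)

theorem c3_pow_three_dvd_of_mem_center (hc : IsLeftRegular (c3 K)) {a : R3 K}
    (ha : a ∈ Subalgebra.center K (R3 K)) (hπ : toMvPolynomial K a = 0) : c3 K ^ 3 ∣ a := by
  have hstep {n : ℕ} {i j : Fin 3} (hij : i ≠ j) (hn : (rotate K)^[n] (X3 K i) = X3 K j)
      (hdvd : c3 K ^ n ∣ a) : c3 K ^ (n + 1) ∣ a := by
    obtain ⟨r, rfl⟩ := hdvd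
    rw [pow_succ]
    exact mul_dvd_mul_left _ <| c3_dvd_of_toMvPolynomial_eq_zero <|
      toMvPolynomial_eq_zero_of_c3_pow_mul_mem_center hc hij hn ha
  have h1 : c3 K ^ 1 ∣ a := (pow_one (c3 K)).symm ▸ c3_dvd_of_toMvPolynomial_eq_zero hπ
  have h2 : c3 K ^ 2 ∣ a := hstep (i := 0) (j := 1) (by decide) (by simp) h1
  exact hstep (i := 0) (j := 2) (by decide) (by simp) h2

theorem mem_center_of_c3_pow_three_mul (hc : IsLeftRegular (c3 K)) {r : R3 K}
    (hr : c3 K ^ 3 * r ∈ Subalgebra.center K (R3 K)) : r ∈ Subalgebra.center K (R3 K) := by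
  have hc3 := Subalgebra.mem_center_iff.mp (c3_pow_three_mem_center (K := K))
  refine Subalgebra.mem_center_iff.mpr fun a => hc.pow 3 ?_
  calc c3 K ^ 3 * (a * r) = a * (c3 K ^ 3 * r) := by rw [← mul_assoc, ← hc3, mul_assoc]
    _ = c3 K ^ 3 * (r * a) := by rw [Subalgebra.mem_center_iff.mp hr, mul_assoc]

theorem rotate_eq_self_of_mem_center (hc : IsLeftRegular (c3 K)) {a : R3 K}
    (ha : a ∈ Subalgebra.center K (R3 K)) : rotate K a = a :=
  hc <| (mul_c3 a).symm.trans (Subalgebra.mem_center_iff.mp ha (c3 K)).symm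

/-- The subalgebra of `R′` generated by `σ₁, σ₂, σ₃, c³, d`, the center as soon as `c` is
left regular. -/
noncomputable def orbitSubalgebra (K : Type*) [Field K] : Subalgebra K (R3 K) :=
  Algebra.adjoin K {S3 K 0, S3 K 1, S3 K 2, c3 K ^ 3, d3 K}

theorem S3_mem_orbitSubalgebra (k : Fin 3) : S3 K k ∈ orbitSubalgebra K :=
  Algebra.subset_adjoin (by fin_cases k <;> simp)

theorem c3_pow_three_mem_orbitSubalgebra : c3 K ^ 3 ∈ orbitSubalgebra K :=
  Algebra.subset_adjoin (by simp)

theorem d3_mem_orbitSubalgebra : d3 K ∈ orbitSubalgebra K :=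
  Algebra.subset_adjoin (by simp)

theorem orbitSubalgebra_le_center : orbitSubalgebra K ≤ Subalgebra.center K (R3 K) := by
  refine Algebra.adjoin_le ?_
  have hS3 (k : Fin 3) := mem_center_of_commute (K := K) (commute_X3_S3 · k)
  rintro _ (rfl | rfl | rfl | rfl | rfl)
  exacts [hS3 0, hS3 1, hS3 2, c3_pow_three_mem_center, d3_mem_center]

theorem mem_map_toMvPolynomial_of_rename_finRotate {f : MvPolynomial (Fin 3) K}
    (hf : MvPolynomial.rename (finRotate 3) f = f) :
    f ∈ (orbitSubalgebra K).map (toMvPolynomial K) := by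
  have hsymm {g : MvPolynomial (Fin 3) K} (hg : g.IsSymmetric) :
      g ∈ (orbitSubalgebra K).map (toMvPolynomial K) := by
    refine Algebra.adjoin_le ?_ (mem_adjoin_esymm_of_isSymmetric (Fintype.card_fin 3).le hg)
    rintro _ ⟨k, rfl⟩
    exact ⟨S3 K k, S3_mem_orbitSubalgebra k, toMvPolynomial_S3 k⟩
  obtain ⟨g, h, hg, hh, rfl⟩ := exists_isSymmetric_add_mul_cyclicSum hf
  exact add_mem (hsymm hg)
    (mul_mem (hsymm hh) ⟨d3 K, d3_mem_orbitSubalgebra, toMvPolynomial_d3⟩)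

theorem exists_eq_add_c3_pow_three_mul (hc : IsLeftRegular (c3 K)) {a : R3 K}
    (ha : a ∈ Subalgebra.center K (R3 K)) :
    ∃ u ∈ orbitSubalgebra K, ∃ r ∈ Subalgebra.center K (R3 K), a = u + c3 K ^ 3 * r := by
  have hrot : MvPolynomial.rename (finRotate 3) (toMvPolynomial K a) = toMvPolynomial K a := by
    rw [← toMvPolynomial_rotate, rotate_eq_self_of_mem_center hc ha]
  obtain ⟨u, hu, hua⟩ := mem_map_toMvPolynomial_of_rename_finRotate hrot
  have hsub : a - u ∈ Subalgebra.center K (R3 K) := sub_mem ha (orbitSubalgebra_le_center hu)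
  obtain ⟨r, hr⟩ := c3_pow_three_dvd_of_mem_center hc hsub
    (by rw [map_sub, ← hua]; exact sub_self _)
  exact ⟨u, hu, r, mem_center_of_c3_pow_three_mul hc (hr ▸ hsub), eq_add_of_sub_eq' hr⟩

theorem lift_monomial_sig3 (k : Fin 3) :
    FreeAlgebra.lift K (fun i => Polynomial.monomial 1 (X3 K i)) (sig3 K k) =
      Polynomial.monomial (k + 1) (S3 K k) := by
  fin_cases k
  · exact (lift_sig3_zero _).trans (by simp [S3_zero])
  · exact (lift_sig3_one _).trans (by simp [S3_one, Polynomial.monomial_mul_monomial])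
  · exact (lift_sig3_two _).trans (by simp [S3_two, Polynomial.monomial_mul_monomial])

/-- The grading of `R′` in which the generators have degree one, encoded as the coaction
`R′ → R′[T]` that multiplies the part of degree `n` by `T ^ n`. -/
noncomputable def grading (K : Type*) [Field K] : R3 K →ₐ[K] Polynomial (R3 K) :=
  lift (fun i => Polynomial.monomial 1 (X3 K i)) fun i k => by
    rw [lift_monomial_sig3, commute_iff_eq]
    simp only [Polynomial.monomial_mul_monomial, (commute_X3_S3 i k).eq, add_comm]

theorem grading_X3 (i : Fin 3) : grading K (X3 K i) = Polynomial.monomial 1 (X3 K i) :=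
  lift_X3 i

theorem grading_S3 (k : Fin 3) : grading K (S3 K k) = Polynomial.monomial (k + 1) (S3 K k) := by
  rw [grading, lift_S3, lift_monomial_sig3]

theorem grading_c3 : grading K (c3 K) = Polynomial.monomial 2 (c3 K) := by
  simp only [c3, map_sub, map_mul, grading_X3, Polynomial.monomial_mul_monomial, Nat.reduceAdd]

theorem grading_d3 : grading K (d3 K) = Polynomial.monomial 3 (d3 K) := by
  simp only [d3, map_add, map_mul, grading_X3, Polynomial.monomial_mul_monomial, Nat.reduceAdd]

theorem sum_coeff_grading (a : R3 K) : ((grading K a).sum fun _ b => b) = a := by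
  let ε : Polynomial (R3 K) →ₐ[K] R3 K :=
    Polynomial.eval₂AlgHom (AlgHom.id K (R3 K)) 1 fun _ => Commute.one_right _
  have h : ε.comp (grading K) = AlgHom.id K (R3 K) :=
    algHom_ext fun i => by simp [ε, grading_X3]
  simpa [ε, Polynomial.eval₂_eq_sum] using DFunLike.congr_fun h a

theorem coeff_grading_mem_orbitSubalgebra {a : R3 K} (ha : a ∈ orbitSubalgebra K) (n : ℕ) :
    (grading K a).coeff n ∈ orbitSubalgebra K := by
  refine coeff_mem_adjoin_of_forall_eq_monomial (grading K) ?_ ha n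
  rintro _ (rfl | rfl | rfl | rfl | rfl)
  exacts [⟨_, grading_S3 0⟩, ⟨_, grading_S3 1⟩, ⟨_, grading_S3 2⟩,
    ⟨_, by rw [map_pow, grading_c3, Polynomial.monomial_pow]⟩, ⟨_, grading_d3⟩]

theorem coeff_grading_c3_pow_three_mul_mem {a : R3 K} {n : ℕ}
    (h : ∀ m < n, (grading K a).coeff m ∈ orbitSubalgebra K) :
    (grading K (c3 K ^ 3 * a)).coeff n ∈ orbitSubalgebra K := by
  rw [map_mul, map_pow, grading_c3, Polynomial.monomial_pow]
  rcases le_or_gt (2 * 3) n with hn | hn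
  · obtain ⟨m, rfl⟩ := Nat.exists_eq_add_of_le' hn
    rw [Polynomial.coeff_monomial_mul]
    exact mul_mem c3_pow_three_mem_orbitSubalgebra (h m (by lia))
  · rw [← Polynomial.C_mul_X_pow_eq_monomial, mul_assoc, Polynomial.coeff_C_mul,
      Polynomial.coeff_X_pow_mul', if_neg (not_le.mpr hn), mul_zero]
    exact zero_mem _

theorem coeff_grading_mem_orbitSubalgebra_of_mem_center (hc : IsLeftRegular (c3 K)) {a : R3 K}
    (ha : a ∈ Subalgebra.center K (R3 K)) (n : ℕ) :
    (grading K a).coeff n ∈ orbitSubalgebra K := by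
  induction n using Nat.strong_induction_on generalizing a with
  | h n ih =>
    obtain ⟨u, hu, r, hr, rfl⟩ := exists_eq_add_c3_pow_three_mul hc ha
    rw [map_add, Polynomial.coeff_add]
    exact add_mem (coeff_grading_mem_orbitSubalgebra hu n)
      (coeff_grading_c3_pow_three_mul_mem fun m hm => ih m hm hr)

theorem center_le_orbitSubalgebra (hc : IsLeftRegular (c3 K)) :
    Subalgebra.center K (R3 K) ≤ orbitSubalgebra K := by
  intro a ha
  rw [← sum_coeff_grading a, Polynomial.sum_def]
  exact sum_mem fun n _ => coeff_grading_mem_orbitSubalgebra_of_mem_center hc ha n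

end R3

theorem center_eq_adjoin_of_domain_general (K : Type*) [Field K] (hc : IsLeftRegular (c3 K)) :
    Subalgebra.center K (R3 K) =
      Algebra.adjoin K {S3 K 0, S3 K 1, S3 K 2, (c3 K) ^ 3, d3 K} :=
  le_antisymm (R3.center_le_orbitSubalgebra hc) R3.orbitSubalgebra_le_center

/-- If `R′` (case `n = 3`) is a domain, then its center is exactly the
`K`-subalgebra generated by `σ_1, σ_2, σ_3, c³, d`. -/
theorem center_eq_adjoin_of_domain (K : Type*) [Field K] [CharZero K]
    (hdom : IsDomain (R3 K)) :
    Subalgebra.center K (R3 K) =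
      Algebra.adjoin K {S3 K 0, S3 K 1, S3 K 2, (c3 K) ^ 3, d3 K} :=
  center_eq_adjoin_of_domain_general K (IsRegular.of_ne_zero R3.c3_ne_zero).left
end
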